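/- arXiv:2006.14379 — 5 statements merged into one kernel-verified Lean document; each statement's English description precedes it below -/
import Mathlib

section
/- Let φ be smooth near 0 with φ(0) = 1/2 and φ′(0) ≠ 0, and set Φ(s, x, δ) = −s x + x² φ(δ x). Then there exist δ₀ > 0 and a compact interval [c₁, c₂] ⊂ (0,∞) and a smooth function q̃(s,δ) on [c₁,c₂] × [0,δ₀] with ∂ₓΦ(s, q̃(s,δ), δ) = 0 for all (s,δ); moreover, writing Φ̃(s,δ) = Φ(s, q̃(s,δ), δ) and s = −ξ₁/(tξ₂) for t ∈ [1,2] and ξ₂ ≠ 0, there exists a smooth function R(u, t, δ), defined and smooth up to δ = 0 on the relevant compact parameter region (in particular bounded together with all its derivatives), such that −t² ξ₂ Φ̃(s, δ) = ξ₁²/(2ξ₂) + δ φ′(0) ξ₁³/(t ξ₂²) + δ² ξ₂ R(ξ₁/ξ₂, t, δ). -/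
open MeasureTheory Set
open scoped ENNReal

/-- The phase `Φ(s, x, δ) = -s x + x² φ(δ x)`. -/
noncomputable def phasePhi (φ : ℝ → ℝ) (s x δ : ℝ) : ℝ := -s * x + x ^ 2 * φ (δ * x)

/-- The critical value `Φ̃(s, δ) = Φ(s, q̃(s,δ), δ)`, where `q̃` is the critical point of
`x ↦ Φ(s, x, δ)`. -/
noncomputable def phasePhiT (φ : ℝ → ℝ) (qc : ℝ → ℝ → ℝ) (s δ : ℝ) : ℝ :=
  phasePhi φ s (qc s δ) δ

/-- A function smooth on a ball agrees on a smaller ball with a globally smooth function. -/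
lemma pte_extend {f : ℝ → ℝ} {c ρ : ℝ} (hρ : 0 < ρ)
    (hf : ContDiffOn ℝ (⊤ : ℕ∞) f (Metric.ball c ρ)) :
    ∃ F : ℝ → ℝ, ContDiff ℝ (⊤ : ℕ∞) F ∧ ∀ x ∈ Metric.closedBall c (ρ / 2), F x = f x := by
  let b : ContDiffBump c := ⟨ρ / 2, 3 * ρ / 4, by linarith, by linarith⟩
  refine ⟨fun x => b x * f x, ?_, fun x hx => ?_⟩
  · rw [contDiff_iff_contDiffAt]
    intro x
    by_cases hx : x ∈ Metric.ball c ρ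
    · exact b.contDiffAt.mul (hf.contDiffAt (Metric.isOpen_ball.mem_nhds hx))
    · have hx' : x ∈ (Metric.closedBall c (3 * ρ / 4))ᶜ := by
        simp only [Metric.mem_ball, not_lt, mem_compl_iff, Metric.mem_closedBall, not_le] at hx ⊢
        linarith
      have : (fun x => b x * f x) =ᶠ[nhds x] fun _ => 0 := by
        filter_upwards [Metric.isClosed_closedBall.isOpen_compl.mem_nhds hx'] with y hy
        have : b y = 0 := b.zero_of_le_dist (by
          simp only [mem_compl_iff, Metric.mem_closedBall, not_le] at hy
          exact hy.le)
        simp [this]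
      exact contDiffAt_const.congr_of_eventuallyEq this
  · have : b x = 1 := b.one_of_mem_closedBall hx
    simp [this]

lemma pte_hasDerivAt_int {f : ℝ → ℝ} (hf : ContDiff ℝ (⊤ : ℕ∞) f) (m : ℕ) (x₀ : ℝ) :
    HasDerivAt (fun w => ∫ t in (0 : ℝ)..1, t ^ m * f (t * w))
      (∫ t in (0 : ℝ)..1, t ^ (m + 1) * deriv f (t * x₀)) x₀ := by
  have hc := hf.continuous
  have hd : Continuous (deriv f) := hf.continuous_deriv (by simp)
  obtain ⟨C, hC⟩ := (isCompact_closedBall (0 : ℝ) (|x₀| + 1)).exists_bound_of_continuousOn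
    hd.continuousOn
  refine (intervalIntegral.hasDerivAt_integral_of_dominated_loc_of_deriv_le
    (F := fun w t => t ^ m * f (t * w)) (F' := fun w t => t ^ (m + 1) * deriv f (t * w))
    (bound := fun _ => C) (s := Metric.ball x₀ 1) (Metric.ball_mem_nhds _ one_pos)
    (Filter.Eventually.of_forall fun w => ?_) ?_ ?_ ?_ ?_ ?_).2
  · exact (by fun_prop : Continuous fun t : ℝ => t ^ m * f (t * w)).aestronglyMeasurable
  · exact (by fun_prop : Continuous fun t : ℝ => t ^ m * f (t * x₀)).intervalIntegrable _ _
  · exact (by fun_prop :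
      Continuous fun t : ℝ => t ^ (m + 1) * deriv f (t * x₀)).aestronglyMeasurable
  · refine Filter.Eventually.of_forall fun t ht w hw => ?_
    rw [uIoc_of_le zero_le_one] at ht
    have h1 : |t| ≤ 1 := abs_le.2 ⟨by linarith [ht.1], ht.2⟩
    have h2 : |w| ≤ |x₀| + 1 := by
      rw [Metric.mem_ball, Real.dist_eq] at hw
      have := abs_sub_abs_le_abs_sub w x₀
      linarith
    have h3 : ‖deriv f (t * w)‖ ≤ C := hC _ (by
      rw [mem_closedBall_zero_iff, Real.norm_eq_abs, abs_mul]
      nlinarith [abs_nonneg t, abs_nonneg w])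
    rw [norm_mul, norm_pow, Real.norm_eq_abs t]
    have h4 : |t| ^ (m + 1) ≤ 1 := pow_le_one₀ (abs_nonneg t) h1
    have h5 : 0 ≤ |t| ^ (m + 1) := by positivity
    nlinarith [norm_nonneg (deriv f (t * w))]
  · exact intervalIntegrable_const
  · refine Filter.Eventually.of_forall fun t _ w _ => ?_
    have hdf : HasDerivAt f (deriv f (t * w)) (t * w) :=
      (hf.differentiable (by simp) _).hasDerivAt
    have : HasDerivAt (fun w => t ^ m * f (t * w)) _ w :=
      (hdf.comp w ((hasDerivAt_id w).const_mul t)).const_mul (t ^ m)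
    exact this.congr_deriv (by ring)

lemma pte_contDiff_int (n : ℕ) : ∀ {f : ℝ → ℝ}, ContDiff ℝ (⊤ : ℕ∞) f → ∀ m : ℕ,
    ContDiff ℝ n (fun w => ∫ t in (0 : ℝ)..1, t ^ m * f (t * w)) := by
  induction n with
  | zero =>
    intro f hf m
    exact contDiff_zero.2 (continuous_iff_continuousAt.2 fun x =>
      (pte_hasDerivAt_int hf m x).continuousAt)
  | succ n ih =>
    intro f hf m
    rw [Nat.cast_add, Nat.cast_one, contDiff_succ_iff_deriv]
    refine ⟨fun x => (pte_hasDerivAt_int hf m x).differentiableAt, by simp, ?_⟩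
    have : deriv (fun w => ∫ t in (0 : ℝ)..1, t ^ m * f (t * w)) =
        fun w => ∫ t in (0 : ℝ)..1, t ^ (m + 1) * deriv f (t * w) :=
      funext fun x => (pte_hasDerivAt_int hf m x).deriv
    rw [this]
    exact ih (contDiff_infty_iff_deriv.1 hf).2 (m + 1)

/-- Hadamard's lemma in one variable. -/
lemma pte_hadamard {f : ℝ → ℝ} (hf : ContDiff ℝ (⊤ : ℕ∞) f) (h0 : f 0 = 0) :
    ∃ k : ℝ → ℝ, ContDiff ℝ (⊤ : ℕ∞) k ∧ (∀ w, f w = w * k w) ∧ HasDerivAt f (k 0) 0 := by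
  have hd : ContDiff ℝ (⊤ : ℕ∞) (deriv f) := (contDiff_infty_iff_deriv.1 hf).2
  refine ⟨fun w => ∫ t in (0 : ℝ)..1, t ^ 0 * deriv f (t * w),
    contDiff_infty.2 fun n => pte_contDiff_int n hd 0, fun w => ?_, ?_⟩
  · have h1 : ∀ t ∈ uIcc (0 : ℝ) 1, HasDerivAt (fun t => f (t * w)) (w * deriv f (t * w)) t := by
      intro t _
      have hdf : HasDerivAt f (deriv f (t * w)) (t * w) :=
        (hf.differentiable (by simp) _).hasDerivAt
      have : HasDerivAt (fun t => f (t * w)) _ t :=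
        hdf.comp t ((hasDerivAt_id t).mul_const w)
      exact this.congr_deriv (by ring)
    have hdc := hd.continuous
    have := intervalIntegral.integral_eq_sub_of_hasDerivAt h1
      ((by fun_prop : Continuous fun t : ℝ => w * deriv f (t * w)).intervalIntegrable _ _)
    rw [intervalIntegral.integral_const_mul] at this
    simp only [pow_zero, one_mul, zero_mul, h0, sub_zero] at this ⊢
    exact this.symm
  · simpa using (hf.differentiable (by simp) 0).hasDerivAt

/-- A smooth local inverse, extended to a globally smooth function. -/
lemma pte_inverse {g : ℝ → ℝ} (hg : ContDiff ℝ (⊤ : ℕ∞) g) (h0 : g 0 = 0)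
    (h1 : HasDerivAt g 1 0) :
    ∃ h : ℝ → ℝ, ContDiff ℝ (⊤ : ℕ∞) h ∧ h 0 = 0 ∧ ∃ ε > 0, ∀ w, |w| ≤ ε → g (h w) = w := by
  have hf' : HasFDerivAt g ((ContinuousLinearEquiv.refl ℝ ℝ : ℝ ≃L[ℝ] ℝ) : ℝ →L[ℝ] ℝ) 0 := by
    have := h1.hasFDerivAt
    have e : ((ContinuousLinearEquiv.refl ℝ ℝ : ℝ ≃L[ℝ] ℝ) : ℝ →L[ℝ] ℝ) =
        ContinuousLinearMap.toSpanSingleton ℝ 1 := by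
      ext; simp
    rw [e]; exact this
  have hn : ((⊤ : ℕ∞) : WithTop ℕ∞) ≠ 0 := by simp
  let e := hg.contDiffAt.toOpenPartialHomeomorph g hf' hn
  have he : (e : ℝ → ℝ) = g := rfl
  have hs : (0 : ℝ) ∈ e.source :=
    ContDiffAt.mem_toOpenPartialHomeomorph_source hg.contDiffAt hf' hn
  have ht : (0 : ℝ) ∈ e.target := by
    have := e.map_source hs
    rwa [he, h0] at this
  have hsymm0 : e.symm 0 = 0 := by
    have := e.left_inv hs
    rwa [he, h0] at this
  have hdc : Continuous (deriv g) := hg.continuous_deriv (by simp)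
  have hsc : ContinuousAt e.symm 0 := e.continuousAt_symm ht
  have hev : ∀ᶠ w in nhds (0 : ℝ), w ∈ e.target ∧ deriv g (e.symm w) ≠ 0 := by
    refine Filter.Eventually.and (e.open_target.mem_nhds ht) ?_
    have : ContinuousAt (fun w => deriv g (e.symm w)) 0 := hdc.continuousAt.comp hsc
    refine this.eventually_ne ?_
    rw [hsymm0, h1.deriv]; exact one_ne_zero
  obtain ⟨ρ, hρ, hball⟩ := Metric.eventually_nhds_iff_ball.1 hev
  have hsm : ContDiffOn ℝ (⊤ : ℕ∞) e.symm (Metric.ball 0 ρ) := by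
    intro w hw
    obtain ⟨a, b⟩ := hball w hw
    refine (e.contDiffAt_symm_deriv b a ?_ ?_).contDiffWithinAt
    · rw [he]; exact (hg.differentiable (by simp) _).hasDerivAt
    · rw [he]; exact hg.contDiffAt
  obtain ⟨h, hh, hhe⟩ := pte_extend hρ hsm
  refine ⟨h, hh, ?_, ρ / 2, by linarith, fun w hw => ?_⟩
  · rw [hhe 0 (by simp; linarith), hsymm0]
  · rw [hhe w (by simpa using hw)]
    have := e.right_inv (hball w (by
      rw [mem_ball_zero_iff, Real.norm_eq_abs]; linarith)).1
    rwa [he] at this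

/-- **Taylor expansion of the critical-value phase (2.16).**  Let `φ` be smooth near `0`
with `φ(0) = 1/2` and `φ'(0) ≠ 0`, and set `Φ(s,x,δ) = -sx + x²φ(δx)`.  Then there are
`δ₀ > 0`, a compact interval `[c₁,c₂] ⊆ (0,∞)` and a smooth function `q̃(s,δ)` on
`[c₁,c₂] × [0,δ₀]` with `∂ₓΦ(s, q̃(s,δ), δ) = 0`; moreover, writing `Φ̃(s,δ) = Φ(s,q̃(s,δ),δ)`
and `s = -ξ₁/(tξ₂)`, there is a smooth function `R(u,t,δ)` (smooth up to `δ = 0`, bounded with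
all derivatives on the relevant compact region) such that
`-t²ξ₂Φ̃(s,δ) = ξ₁²/(2ξ₂) + δ φ'(0) ξ₁³/(tξ₂²) + δ² ξ₂ R(ξ₁/ξ₂, t, δ)`
for `t ∈ [1,2]`, `ξ₂ ≠ 0`, `s ∈ [c₁,c₂]` and `δ ∈ [0,δ₀]`. -/
theorem phase_taylor_expansion
    (r : ℝ) (hr : 0 < r) (φ : ℝ → ℝ) (hφ : ContDiffOn ℝ (⊤ : ℕ∞) φ (Set.Ioo (-r) r))
    (hφ0 : φ 0 = 1 / 2) (hφ' : deriv φ 0 ≠ 0) :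
    ∃ δ₀ > 0, ∃ c₁ c₂ : ℝ, 0 < c₁ ∧ c₁ ≤ c₂ ∧ ∃ qc : ℝ → ℝ → ℝ,
      ContDiffOn ℝ (⊤ : ℕ∞) (fun z : ℝ × ℝ => qc z.1 z.2) (Set.Icc c₁ c₂ ×ˢ Set.Icc (0 : ℝ) δ₀) ∧
      (∀ s ∈ Set.Icc c₁ c₂, ∀ δ ∈ Set.Icc (0 : ℝ) δ₀,
        deriv (fun x => phasePhi φ s x δ) (qc s δ) = 0) ∧
      ∃ R : ℝ → ℝ → ℝ → ℝ,
        ContDiff ℝ (⊤ : ℕ∞) (fun z : ℝ × ℝ × ℝ => R z.1 z.2.1 z.2.2) ∧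
        (∀ n : ℕ, ∃ Cn : ℝ, ∀ z ∈ Set.Icc (-(2 * c₂)) (-c₁) ×ˢ
            (Set.Icc (1 : ℝ) 2 ×ˢ Set.Icc (0 : ℝ) δ₀),
          ‖iteratedFDeriv ℝ n (fun w : ℝ × ℝ × ℝ => R w.1 w.2.1 w.2.2) z‖ ≤ Cn) ∧
        (∀ t ∈ Set.Icc (1 : ℝ) 2, ∀ ξ : ℝ × ℝ, ξ.2 ≠ 0 →
          -ξ.1 / (t * ξ.2) ∈ Set.Icc c₁ c₂ →
          ∀ δ ∈ Set.Icc (0 : ℝ) δ₀,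
            -(t ^ 2 * ξ.2 * phasePhiT φ qc (-ξ.1 / (t * ξ.2)) δ) =
              ξ.1 ^ 2 / (2 * ξ.2) + δ * deriv φ 0 * (ξ.1 ^ 3 / (t * ξ.2 ^ 2)) +
                δ ^ 2 * ξ.2 * R (ξ.1 / ξ.2) t δ) := by
  have hball : Metric.ball (0 : ℝ) r = Set.Ioo (-r) r := by
    rw [Real.ball_eq_Ioo]; simp
  obtain ⟨φ₁, hφ₁, hext⟩ := pte_extend (f := φ) (c := 0) hr (by rwa [hball])
  have hext' : ∀ y, |y| < r / 2 → φ =ᶠ[nhds y] φ₁ := by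
    intro y hy
    filter_upwards [Metric.isOpen_ball.mem_nhds
      (show y ∈ Metric.ball (0 : ℝ) (r / 2) by simpa using hy)] with z hz
    exact (hext z (Metric.ball_subset_closedBall hz)).symm
  have h0r : |(0 : ℝ)| < r / 2 := by simp; linarith
  have hφ₁0 : φ₁ 0 = 1 / 2 := by rw [← (hext' 0 h0r).eq_of_nhds, hφ0]
  have hφ₁d : deriv φ 0 = deriv φ₁ 0 := (hext' 0 h0r).deriv_eq
  have hDφ : ∀ y, HasDerivAt φ₁ (deriv φ₁ y) y := fun y =>
    (hφ₁.differentiable (by simp) y).hasDerivAt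
  have hdφ₁ : ContDiff ℝ (⊤ : ℕ∞) (deriv φ₁) := (contDiff_infty_iff_deriv.1 hφ₁).2
  -- the rescaled critical point equation
  let P : ℝ → ℝ := fun y => 2 * φ₁ y + y * deriv φ₁ y
  have hP : ContDiff ℝ (⊤ : ℕ∞) P := by fun_prop
  have hP0 : P 0 = 1 := by simp [P, hφ₁0]
  have hg1 : HasDerivAt (fun y => y * P y) 1 0 := by
    have : HasDerivAt (fun y => y * P y) _ 0 :=
      (hasDerivAt_id (0 : ℝ)).mul (hP.differentiable (by simp) 0).hasDerivAt
    exact this.congr_deriv (by simp [hP0])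
  obtain ⟨h, hh, hh0, ε, hε, hgh⟩ := pte_inverse (g := fun y => y * P y)
    (contDiff_id.mul hP) (by simp) hg1
  obtain ⟨k, hk, hhk, hhd⟩ := pte_hadamard hh hh0
  have hk0 : k 0 = 1 := by
    have h2 : HasDerivAt ((fun y => y * P y) ∘ h) (1 * k 0) 0 :=
      HasDerivAt.comp (0 : ℝ) (by rw [hh0]; exact hg1) hhd
    have h3 : ((fun y => y * P y) ∘ h) =ᶠ[nhds 0] id := by
      filter_upwards [Metric.closedBall_mem_nhds (0 : ℝ) hε] with w hw
      exact hgh w (by simpa using hw)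
    have := h2.unique ((hasDerivAt_id (0 : ℝ)).congr_of_eventuallyEq h3)
    linarith
  have hcrit : ∀ w, |w| ≤ ε → k w * P (h w) = 1 := by
    intro w hw
    rcases eq_or_ne w 0 with rfl | hw0
    · rw [hh0, hk0, hP0, one_mul]
    · have := hgh w hw
      apply mul_left_cancel₀ hw0
      rw [← mul_assoc, ← hhk, this, mul_one]
  obtain ⟨η, hη, hηr⟩ : ∃ η > 0, ∀ w, |w| < η → |h w| < r / 2 := by
    have : ∀ᶠ w in nhds (0 : ℝ), |h w| < r / 2 :=
      (hh.continuous.abs.continuousAt (x := 0)).eventually_lt continuousAt_const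
        (by rw [hh0]; exact h0r)
    obtain ⟨η, hη, H⟩ := Metric.eventually_nhds_iff_ball.1 this
    exact ⟨η, hη, fun w hw => H w (by simpa using hw)⟩
  -- the profile of the critical value
  let F : ℝ → ℝ := fun w => -k w + k w ^ 2 * φ₁ (h w) + 1 / 2
  have hF : ContDiff ℝ (⊤ : ℕ∞) F := by fun_prop
  have hF0 : F 0 = 0 := by simp [F, hk0, hh0, hφ₁0]; norm_num
  obtain ⟨F₁, hF₁, hFF₁, hFd⟩ := pte_hadamard hF hF0
  have hF₁0 : F₁ 0 = deriv φ 0 := by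
    have hkd := (hk.differentiable (by simp) 0).hasDerivAt
    have h2 : HasDerivAt (fun w => φ₁ (h w)) (deriv φ₁ 0 * k 0) 0 :=
      HasDerivAt.comp (0 : ℝ) (by rw [hh0]; exact hDφ 0) hhd
    have h3 : HasDerivAt F _ 0 := ((hkd.neg.add ((hkd.pow 2).mul h2)).add_const (1 / 2))
    have := hFd.unique h3
    rw [this, hφ₁d]
    simp [hk0, hh0, hφ₁0]
    ring
  obtain ⟨G, hG, hFG, -⟩ := pte_hadamard (f := fun w => F₁ w - F₁ 0)
    (hF₁.sub contDiff_const) (by simp)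
  have hFexp : ∀ w, -k w + k w ^ 2 * φ₁ (h w) =
      -(1 / 2) + w * (deriv φ 0 + w * G w) := by
    intro w
    have h2 := hFF₁ w
    have h3 := hFG w
    simp only [F] at h2
    have h4 : F₁ w = deriv φ 0 + w * G w := by rw [← hF₁0]; linarith
    rw [← h4]; linarith
  -- a global smooth extension of `t ↦ t⁻¹`
  obtain ⟨v, hv, hve⟩ := pte_extend (f := fun t : ℝ => t⁻¹) (c := 3 / 2) (ρ := 1) one_pos
    (by
      intro t ht
      rw [Metric.mem_ball, Real.dist_eq, abs_lt] at ht
      exact (contDiffAt_inv ℝ (by linarith : t ≠ 0)).contDiffWithinAt)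
  have hvt : ∀ t ∈ Set.Icc (1 : ℝ) 2, v t = t⁻¹ := by
    intro t ht
    apply hve
    rw [Metric.mem_closedBall, Real.dist_eq, abs_le]
    constructor <;> linarith [ht.1, ht.2]
  have hδ : 0 < min ε η / 4 := by positivity
  have hw : ∀ s ∈ Set.Icc (1 : ℝ) 2, ∀ δ ∈ Set.Icc (0 : ℝ) (min ε η / 4),
      |δ * s| ≤ ε ∧ |h (δ * s)| < r / 2 := by
    intro s hs δ hδ'
    have h2 : |δ * s| ≤ min ε η / 2 := by
      rw [abs_of_nonneg (mul_nonneg hδ'.1 (by linarith [hs.1]))]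
      nlinarith [hs.1, hs.2, hδ'.1, hδ'.2]
    have h3 := min_le_left ε η
    have h4 := min_le_right ε η
    exact ⟨by linarith, hηr _ (by linarith)⟩
  have hRs : ContDiff ℝ (⊤ : ℕ∞) (fun z : ℝ × ℝ × ℝ =>
      -(z.1 ^ 4 * v z.2.1 ^ 2 * G (-(z.2.2 * z.1 * v z.2.1)))) := by fun_prop
  refine ⟨min ε η / 4, hδ, 1, 2, one_pos, one_le_two, fun s δ => s * k (δ * s), ?_, ?_,
    fun u t δ => -(u ^ 4 * v t ^ 2 * G (-(δ * u * v t))), hRs, ?_, ?_⟩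
  · exact (by fun_prop : ContDiff ℝ (⊤ : ℕ∞)
      (fun z : ℝ × ℝ => z.1 * k (z.2 * z.1))).contDiffOn
  · intro s hs δ hδ'
    obtain ⟨h2, h3⟩ := hw s hs δ hδ'
    have hy : δ * (s * k (δ * s)) = h (δ * s) := by rw [hhk]; ring
    have hd : HasDerivAt φ (deriv φ₁ (h (δ * s))) (δ * (s * k (δ * s))) := by
      rw [hy]
      exact (hDφ _).congr_of_eventuallyEq (hext' _ h3)
    have h4 : HasDerivAt (fun x => φ (δ * x)) (deriv φ₁ (h (δ * s)) * (δ * 1))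
        (s * k (δ * s)) :=
      HasDerivAt.comp (s * k (δ * s)) hd ((hasDerivAt_id (s * k (δ * s))).const_mul δ)
    have h5 := ((hasDerivAt_id (s * k (δ * s))).const_mul (-s)).add
      (((hasDerivAt_id (s * k (δ * s))).pow 2).mul h4)
    have h6 : HasDerivAt (fun x => phasePhi φ s x δ) _ (s * k (δ * s)) := h5
    rw [h6.deriv]
    have h7 := hcrit _ h2
    have h8 : φ (δ * (s * k (δ * s))) = φ₁ (h (δ * s)) := by
      rw [hy]; exact (hext' _ h3).eq_of_nhds
    simp only [P] at h7
    simp only [id, Pi.pow_apply, h8]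
    have h9 := hhk (δ * s)
    rw [show (0 : ℝ) = s * (k (δ * s) * (2 * φ₁ (h (δ * s)) +
      (δ * s * k (δ * s)) * deriv φ₁ (h (δ * s))) - 1) by rw [← h9, h7]; ring]
    push_cast
    ring
  · intro n
    obtain ⟨C, hC⟩ := (isCompact_Icc.prod (isCompact_Icc.prod isCompact_Icc) :
      IsCompact (Set.Icc (-(2 * 2)) (-1 : ℝ) ×ˢ
        (Set.Icc (1 : ℝ) 2 ×ˢ Set.Icc (0 : ℝ) (min ε η / 4)))).exists_bound_of_continuousOn
      (hRs.continuous_iteratedFDeriv (m := n) (by exact_mod_cast le_top)).continuousOn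
    exact ⟨C, hC⟩
  · intro t ht ξ hξ hs δ hδ'
    obtain ⟨h2, h3⟩ := hw _ hs δ hδ'
    have ht0 : t ≠ 0 := by linarith [ht.1]
    obtain ⟨s, hsdef⟩ : ∃ s, s = -ξ.1 / (t * ξ.2) := ⟨_, rfl⟩
    have hξ1 : ξ.1 = -(s * t * ξ.2) := by rw [hsdef]; field_simp
    rw [← hsdef] at h2 h3 ⊢
    have hy : δ * (s * k (δ * s)) = h (δ * s) := by rw [hhk]; ring
    have hval : phasePhiT φ (fun s δ => s * k (δ * s)) s δ =
        s ^ 2 * (-(1 / 2) + δ * s * (deriv φ 0 + δ * s * G (δ * s))) := by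
      rw [← hFexp]
      simp only [phasePhiT, phasePhi]
      rw [hy, (hext' _ h3).eq_of_nhds]
      ring
    have harg : -(δ * (ξ.1 / ξ.2) * v t) = δ * s := by
      rw [hvt t ht, hξ1]; field_simp
    simp only [harg]
    rw [hval, hvt t ht, hξ1]
    field_simp
    ring
end

section
/- Let j > 2k and let l be an integer with 2^l ≈ 2^{(j−k)/2}. Let C_θ^l and C_{θ′}^l be two sectors of angular width ≈ 2^{−l} with dist(C_θ^l, C_{θ′}^l) ≲ 2^{−l}, and let g_θ^l, g_{θ′}^l be the corresponding angular Fourier restrictions of g. Then for p, q satisfying 1/(2p) < 1/q ≤ 3/(5p), 3/q ≤ 1 − 1/p, 1/q ≥ 1/2 − 1/p, there is a constant C (independent of j, k, l, θ, θ′) such that ‖𝓕_j^k g_θ^l · 𝓕_j^k g_{θ′}^l‖_{L^{q/p}(ℝ³)} ≤ C 2^{−2j p/q} 2^{−((j−k)/2)(1 − p/q)} ‖g_θ^l‖_{L²} ‖g_{θ′}^l‖_{L²}. -/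
open MeasureTheory Set
open scoped ENNReal

/-- The Euclidean norm of `ξ = (ξ₁, ξ₂) ∈ ℝ²`. -/
noncomputable def nrm (ξ : ℝ × ℝ) : ℝ := Real.sqrt (ξ.1 ^ 2 + ξ.2 ^ 2)

/-- A (nonunitary) Fourier transform on `ℝ²`. -/
noncomputable def fhat (f : ℝ × ℝ → ℂ) (ξ : ℝ × ℝ) : ℂ :=
  ∫ x : ℝ × ℝ, Complex.exp (-Complex.I * Complex.ofReal (ξ.1 * x.1 + ξ.2 * x.2)) * f x

/-- The rescaled Fourier integral operator
`𝓕_j^k g(y,t) = ρ₁(y,t) ∫ e^{i 2^j (ξ·y - t²ξ₂Φ̃(s,δ))} a(2^jξ,t) ρ₀(|ξ|) χ̃(ξ₁/ξ₂) ĝ(ξ) dξ`,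
with `s = -ξ₁/(tξ₂)` and `δ = 2^{-k}`. -/
noncomputable def FIOresc (φ : ℝ → ℝ) (qc : ℝ → ℝ → ℝ) (a : ℝ × ℝ → ℝ → ℂ)
    (ρ₀ : ℝ → ℝ) (ρ₁ : (ℝ × ℝ) × ℝ → ℝ) (χ : ℝ → ℝ) (j k : ℕ)
    (g : ℝ × ℝ → ℂ) (y : ℝ × ℝ) (t : ℝ) : ℂ :=
  Complex.ofReal (ρ₁ (y, t)) * ∫ ξ : ℝ × ℝ,
    Complex.exp (Complex.I * Complex.ofReal ((2 : ℝ) ^ (j : ℝ) *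
        (ξ.1 * y.1 + ξ.2 * y.2 -
          t ^ 2 * ξ.2 * phasePhiT φ qc (-ξ.1 / (t * ξ.2)) ((2 : ℝ) ^ (-(k : ℝ)))))) *
      a ((2 : ℝ) ^ (j : ℝ) * ξ.1, (2 : ℝ) ^ (j : ℝ) * ξ.2) t *
      Complex.ofReal (ρ₀ (nrm ξ)) * Complex.ofReal (χ (ξ.1 / ξ.2)) * fhat g ξ

/-- The angular sector (cone) `{ξ : |ξ₁/ξ₂ - κ| ≤ 2·2^{-l}}` with direction `κ` and
width `2^{-l}`. -/
def sector (κ w : ℝ) : Set (ℝ × ℝ) := {ξ : ℝ × ℝ | |ξ.1 / ξ.2 - κ| ≤ 2 * w}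

section planch
open FourierTransform SchwartzMap
open scoped ContDiff

theorem planch_E {E : Type*} [NormedAddCommGroup E] [MeasurableSpace E] [BorelSpace E]
    [InnerProductSpace ℝ E] [FiniteDimensional ℝ E] (f : E → ℂ) (hf : Integrable f)
    (hf2 : MemLp f 2) : eLpNorm (𝓕 f) 2 volume = eLpNorm f 2 volume := by
  have hcont : Continuous (𝓕 f) := by
    exact VectorFourier.fourierIntegral_continuous (μ := (volume : Measure E)) (L := innerₗ E)
      Real.continuous_fourierChar
      (by exact continuous_inner) hf
  have h1 : 𝓕 f =ᵐ[volume] (𝓕 (hf2.toLp f) : Lp (α := E) ℂ 2 volume) := by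
    apply ae_eq_of_integral_contDiff_smul_eq
    · exact hcont.locallyIntegrable
    · exact (Lp.memLp (𝓕 (hf2.toLp f) : Lp (α := E) ℂ 2 volume)).locallyIntegrable (by norm_num)
    · intro g hg hgc
      have hgc' : HasCompactSupport (fun x => (g x : ℂ)) := hgc.comp_left (g := fun r : ℝ => (r : ℂ)) (by simp)
      have hg' : ContDiff ℝ ∞ (fun x => (g x : ℂ)) := Complex.ofRealCLM.contDiff.comp hg
      let G : 𝓢(E, ℂ) := hgc'.toSchwartzMap hg'
      have hG : ∀ x, G x = g x := fun x => rfl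
      have e := congrArg (fun T => T G) (Lp.fourier_toTemperedDistribution_eq (hf2.toLp f))
      simp only [TemperedDistribution.fourier_apply, Lp.toTemperedDistribution_apply] at e
      have e2 : ∫ x, (𝓕 G) x • (hf2.toLp f) x = ∫ x, (𝓕 G) x • f x := by
        apply integral_congr_ae
        filter_upwards [hf2.coeFn_toLp] with x hx
        rw [hx]
      have e3 : ∫ x, (𝓕 (G : E → ℂ)) x • f x = ∫ x, G x • 𝓕 f x := by
        have := VectorFourier.integral_fourierIntegral_smul_eq_flip (μ := (volume : Measure E)) (ν := (volume : Measure E)) (L := innerₗ E) (f := (G : E → ℂ)) (g := f) Real.continuous_fourierChar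
          (by exact continuous_inner) G.integrable hf
        rw [flip_innerₗ] at this
        exact this
      have e4 : ∀ (u : E → ℂ), ∫ x, g x • u x = ∫ x, G x • u x := by
        intro u
        simp [hG]
      rw [e4, e4, ← e, e2, ← e3]
      rfl
  rw [eLpNorm_congr_ae h1, ← eLpNorm_congr_ae hf2.coeFn_toLp]
  have := Lp.norm_fourier_eq (hf2.toLp f)
  rw [Lp.norm_def, Lp.norm_def] at this
  exact (ENNReal.toReal_eq_toReal_iff' (Lp.eLpNorm_ne_top _) (Lp.eLpNorm_ne_top _)).1 this

end planch

noncomputable def TT (c : ℝ) (h : ℝ × ℝ → ℂ) (y : ℝ × ℝ) : ℂ :=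
  ∫ ξ : ℝ × ℝ, Complex.exp (Complex.I * Complex.ofReal (c * (ξ.1 * y.1 + ξ.2 * y.2))) * h ξ

open FourierTransform in
theorem TT_eq (c : ℝ) (h : ℝ × ℝ → ℂ) (y : ℝ × ℝ) :
    TT c h y = 𝓕 (h ∘ (WithLp.ofLp : WithLp 2 (ℝ × ℝ) → ℝ × ℝ))
      (WithLp.toLp 2 ((-(c / (2 * Real.pi))) • y)) := by
  rw [Real.fourier_eq', TT,
    ← (WithLp.volume_preserving_ofLp (U := ℝ) (V := ℝ)).integral_comp
      (MeasurableEquiv.toLp 2 (ℝ × ℝ)).symm.measurableEmbedding]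
  refine integral_congr_ae (Filter.Eventually.of_forall fun v => ?_)
  have hpi := Real.pi_ne_zero
  simp only [WithLp.prod_inner_apply, Function.comp, smul_eq_mul]
  congr 2
  rw [mul_comm]
  congr 2
  simp
  field_simp
  ring

theorem TT_cont (c : ℝ) (h : ℝ × ℝ → ℂ) (hh : Integrable h) : Continuous (TT c h) := by
  unfold TT
  refine continuous_of_dominated (bound := fun ξ => ‖h ξ‖) ?_ ?_ hh.norm ?_
  · intro y
    refine AEStronglyMeasurable.mul ?_ hh.1
    exact (by fun_prop : Continuous _).aestronglyMeasurable
  · intro y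
    refine Filter.Eventually.of_forall fun ξ => ?_
    rw [norm_mul, mul_comm Complex.I, Complex.norm_exp_ofReal_mul_I, one_mul]
  · refine Filter.Eventually.of_forall fun ξ => ?_
    fun_prop

theorem TT_L2 (c : ℝ) (hc : c ≠ 0) (h : ℝ × ℝ → ℂ) (hh : Integrable h) (h2 : MemLp h 2) :
    eLpNorm (TT c h) 2 volume = ENNReal.ofReal (2 * Real.pi / |c|) * eLpNorm h 2 volume := by
  have hb : (-(c / (2 * Real.pi))) ≠ 0 := by
    have := Real.pi_ne_zero
    simp [hc, this]
  set b := (-(c / (2 * Real.pi))) with hbd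
  set F : WithLp 2 (ℝ × ℝ) → ℂ := h ∘ (WithLp.ofLp : WithLp 2 (ℝ × ℝ) → ℝ × ℝ) with hF
  have mp := (WithLp.volume_preserving_ofLp (U := ℝ) (V := ℝ))
  have mp' := (WithLp.volume_preserving_toLp (U := ℝ) (V := ℝ))
  have hFi : Integrable F := mp.integrable_comp_of_integrable hh
  have hF2 : MemLp F 2 := h2.comp_measurePreserving mp
  have hP := planch_E F hFi hF2
  have e0 : eLpNorm F 2 volume = eLpNorm h 2 volume := eLpNorm_comp_measurePreserving h2.1 mp
  rw [e0] at hP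
  have hcont : Continuous (FourierTransform.fourier F) := by
    exact VectorFourier.fourierIntegral_continuous (μ := (volume : Measure _)) (L := innerₗ _)
      Real.continuous_fourierChar (by exact continuous_inner) hFi
  set G : ℝ × ℝ → ℂ := (FourierTransform.fourier F) ∘ (WithLp.toLp 2 : ℝ × ℝ → WithLp 2 (ℝ × ℝ))
  have hG : Continuous G := hcont.comp (WithLp.prod_continuous_toLp 2 ℝ ℝ)
  have e1 : eLpNorm G 2 volume = eLpNorm h 2 volume := by
    rw [← hP]; exact eLpNorm_comp_measurePreserving hcont.aestronglyMeasurable mp'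
  have e2 : TT c h = G ∘ (fun y => b • y) := by
    ext y; rw [TT_eq]; rfl
  rw [e2, ← eLpNorm_map_measure hG.aestronglyMeasurable (by fun_prop),
    Measure.map_addHaar_smul _ hb, eLpNorm_smul_measure_of_ne_top (by norm_num), e1]
  have hd : Module.finrank ℝ (ℝ × ℝ) = 2 := by simp
  rw [hd, smul_eq_mul]
  congr 1
  rw [ENNReal.ofReal_rpow_of_pos (by positivity)]
  congr 1
  have : |(b^2)⁻¹| = (2 * Real.pi / |c|)^2 := by
    rw [abs_of_pos (by positivity), div_pow, sq_abs, hbd]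
    field_simp
  rw [this, ← Real.rpow_natCast, ← Real.rpow_mul (by positivity)]
  norm_num

theorem TT_not_int (c : ℝ) (h : ℝ × ℝ → ℂ) (hh : ¬ AEStronglyMeasurable h volume) :
    TT c h = 0 := by
  ext y
  apply integral_undef
  intro hi
  apply hh
  have h1 : AEStronglyMeasurable (fun ξ : ℝ × ℝ => Complex.exp (-(Complex.I * Complex.ofReal (c * (ξ.1 * y.1 + ξ.2 * y.2))))) volume :=
    (by fun_prop : Continuous _).aestronglyMeasurable
  refine (h1.mul hi.1).congr (Filter.Eventually.of_forall fun ξ => ?_)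
  simp [← mul_assoc, ← Complex.exp_add]

theorem fhat_eq_TT (g : ℝ × ℝ → ℂ) : fhat g = TT (-1) g := by
  ext ξ
  unfold fhat TT
  congr 1; ext x
  congr 2
  push_cast
  ring

theorem TT_nonint (c : ℝ) (h : ℝ × ℝ → ℂ) (hh : ¬ Integrable h) :
    TT c h = 0 := by
  by_cases hm : AEStronglyMeasurable h volume
  · ext y
    apply integral_undef
    intro hi
    apply hh
    refine hi.norm.mono' hm (Filter.Eventually.of_forall fun ξ => ?_)
    rw [norm_mul, mul_comm Complex.I, Complex.norm_exp_ofReal_mul_I, one_mul]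
  · exact TT_not_int c h hm

/-- key abstract estimate -/
theorem TT_key (c : ℝ) (hc : c ≠ 0) (h u : ℝ × ℝ → ℂ) (hu : MemLp u 2) (S : Set (ℝ × ℝ))
    (hS : MeasurableSet S) (K : ℝ) (hK : 0 ≤ K)
    (hb : ∀ ξ, ‖h ξ‖ ≤ K * S.indicator (fun ξ => ‖u ξ‖) ξ) :
    (∀ y, ‖TT c h y‖ₑ ≤ ENNReal.ofReal K * ((volume S) ^ (1/2 : ℝ) * eLpNorm u 2 volume)) ∧
    AEStronglyMeasurable (TT c h) volume ∧
    eLpNorm (TT c h) 2 volume ≤ ENNReal.ofReal (2 * Real.pi / |c|) *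
      (ENNReal.ofReal K * eLpNorm u 2 volume) := by
  by_cases hi : Integrable h
  swap
  · rw [TT_nonint c h hi]
    exact ⟨by simp, aestronglyMeasurable_zero, by simp⟩
  have hm := hi.1
  have hle : ∀ ξ, ‖h ξ‖ ≤ K * ‖u ξ‖ := fun ξ => (hb ξ).trans (by
    gcongr; exact indicator_le_self' (fun _ _ => norm_nonneg _) ξ)
  have h2 : MemLp h 2 := hu.of_le_mul hm (Filter.Eventually.of_forall hle)
  refine ⟨fun y => ?_, (TT_cont c h hi).aestronglyMeasurable, ?_⟩
  · calc ‖TT c h y‖ₑ ≤ ∫⁻ ξ, ‖h ξ‖ₑ := by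
          refine (enorm_integral_le_lintegral_enorm _).trans (lintegral_mono fun ξ => ?_)
          rw [enorm_mul, ← ofReal_norm, mul_comm Complex.I, Complex.norm_exp_ofReal_mul_I]
          simp
      _ ≤ ∫⁻ ξ, ENNReal.ofReal K * S.indicator (fun ξ => ‖u ξ‖ₑ) ξ := by
          refine lintegral_mono fun ξ => ?_
          rw [← ofReal_norm]
          refine (ENNReal.ofReal_le_ofReal (hb ξ)).trans ?_
          rw [ENNReal.ofReal_mul hK]
          gcongr
          by_cases hx : ξ ∈ S <;> simp [hx]
      _ = ENNReal.ofReal K * ∫⁻ ξ in S, ‖u ξ‖ₑ := by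
          rw [lintegral_const_mul' _ _ ENNReal.ofReal_ne_top, lintegral_indicator hS]
      _ ≤ _ := by
          gcongr
          rw [← eLpNorm_one_eq_lintegral_enorm]
          refine (eLpNorm_le_eLpNorm_mul_rpow_measure_univ (p := 1) (q := 2) (by norm_num) hu.1.restrict).trans ?_
          rw [mul_comm]
          gcongr
          · simp
            norm_num
          · exact Measure.restrict_le_self
  · rw [TT_L2 c hc h hi h2]
    gcongr
    exact eLpNorm_le_mul_eLpNorm_of_ae_le_mul (Filter.Eventually.of_forall hle) 2

theorem vol_S (κ w R : ℝ) (hw : 0 ≤ w) (hR : 0 ≤ R) :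
    MeasurableSet {ξ : ℝ × ℝ | |ξ.2| ≤ R ∧ |ξ.1 - κ * ξ.2| ≤ 2 * w * R} ∧
    volume {ξ : ℝ × ℝ | |ξ.2| ≤ R ∧ |ξ.1 - κ * ξ.2| ≤ 2 * w * R} ≤ ENNReal.ofReal (8 * R ^ 2 * w) := by
  have hm : MeasurableSet {ξ : ℝ × ℝ | |ξ.2| ≤ R ∧ |ξ.1 - κ * ξ.2| ≤ 2 * w * R} := by
    refine IsClosed.measurableSet (IsClosed.and ?_ ?_)
    · exact isClosed_le (by fun_prop) (by fun_prop)
    · exact isClosed_le (by fun_prop) (by fun_prop)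
  refine ⟨hm, ?_⟩
  rw [Measure.volume_eq_prod, Measure.prod_apply_symm hm]
  calc _ ≤ ∫⁻ y : ℝ, (Icc (-R) R).indicator (fun _ => ENNReal.ofReal (4 * w * R)) y := by
        refine lintegral_mono fun y => ?_
        by_cases hy : y ∈ Icc (-R) R
        · rw [indicator_of_mem hy]
          calc _ ≤ volume (Icc (κ * y - 2 * w * R) (κ * y + 2 * w * R)) := by
                apply measure_mono
                rintro x ⟨_, hx⟩
                simp only [abs_le] at hx
                constructor <;> linarith [hx.1, hx.2]
            _ = _ := by rw [Real.volume_Icc]; congr 1; ring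
        · have : (fun x => (x, y)) ⁻¹' {ξ : ℝ × ℝ | |ξ.2| ≤ R ∧ |ξ.1 - κ * ξ.2| ≤ 2 * w * R} = ∅ := by
            ext x
            simp only [mem_preimage, mem_ofPred_eq, mem_empty_iff_false, iff_false, not_and]
            intro hx
            exact absurd (abs_le.1 hx) hy
          rw [this]; simp
    _ = _ := by
        rw [lintegral_indicator measurableSet_Icc, setLIntegral_const, Real.volume_Icc,
          ← ENNReal.ofReal_mul (by positivity)]
        congr 1; ring
    _ ≤ _ := le_rfl

theorem FIO_bound
    (φ : ℝ → ℝ) (c₁ c₂ : ℝ) (hc₁ : 0 < c₁) (qc : ℝ → ℝ → ℝ)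
    (a : ℝ × ℝ → ℝ → ℂ) (A : ℝ)
    (ha : ∀ t ∈ Set.Icc (1 / 2 : ℝ) 4, ∀ ξ : ℝ × ℝ, ‖a ξ t‖ ≤ A)
    (χ : ℝ → ℝ) (hχ : ContDiff ℝ (⊤ : ℕ∞) χ) (hχs : tsupport χ ⊆ Set.Icc c₁ c₂)
    (ρ₀ : ℝ → ℝ) (hρ₀ : ContDiff ℝ (⊤ : ℕ∞) ρ₀) (hρ₀c : HasCompactSupport ρ₀)
    (ρ₁ : (ℝ × ℝ) × ℝ → ℝ) (hρ₁ : ContDiff ℝ (⊤ : ℕ∞) ρ₁) (hρ₁c : HasCompactSupport ρ₁)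
    (hρ₁s : tsupport ρ₁ ⊆ {z : (ℝ × ℝ) × ℝ | z.2 ∈ Set.Icc (1 / 2 : ℝ) 4}) :
    ∃ C > 0, ∀ j k l : ℕ, ∀ κ : ℝ, ∀ g gθ : ℝ × ℝ → ℂ,
        (∀ ξ, fhat gθ ξ =
          Set.indicator (sector κ ((2 : ℝ) ^ (-(l : ℝ)))) (fhat g) ξ) →
        eLpNorm gθ 2 volume ≠ ⊤ →
        (∀ y t, ‖FIOresc φ qc a ρ₀ ρ₁ χ j k gθ y t‖ₑ ≤
          ENNReal.ofReal (C * (2 : ℝ) ^ (-(l : ℝ) / 2)) * eLpNorm gθ 2 volume) ∧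
        (∀ t, AEStronglyMeasurable (fun y => FIOresc φ qc a ρ₀ ρ₁ χ j k gθ y t) volume ∧
          eLpNorm (fun y => FIOresc φ qc a ρ₀ ρ₁ χ j k gθ y t) 2 volume ≤
          ENNReal.ofReal (C * (2 : ℝ) ^ (-(j : ℝ))) * eLpNorm gθ 2 volume) := by
  obtain ⟨M₀, hM₀⟩ := hρ₀c.exists_bound_of_continuous hρ₀.continuous
  obtain ⟨M₁, hM₁⟩ := hρ₁c.exists_bound_of_continuous hρ₁.continuous
  have hχc : HasCompactSupport χ := IsCompact.of_isClosed_subset isCompact_Icc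
    (isClosed_tsupport _) hχs
  obtain ⟨M₂, hM₂⟩ := hχc.exists_bound_of_continuous hχ.continuous
  obtain ⟨R, hRpos, hR⟩ := hρ₀c.isBounded.exists_pos_norm_le
  have hM₀0 : 0 ≤ M₀ := (norm_nonneg _).trans (hM₀ 0)
  have hM₁0 : 0 ≤ M₁ := (norm_nonneg _).trans (hM₁ 0)
  have hM₂0 : 0 ≤ M₂ := (norm_nonneg _).trans (hM₂ 0)
  have hA0 : 0 ≤ A := (norm_nonneg _).trans (ha 1 (by norm_num) 0)
  have hχ0 : χ 0 = 0 := by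
    by_contra hne
    have := hχs (subset_tsupport _ hne)
    linarith [this.1]
  have hρ₁0 : ∀ y t, t ∉ Set.Icc (1 / 2 : ℝ) 4 → ρ₁ (y, t) = 0 := by
    intro y t ht
    by_contra hne
    exact ht (hρ₁s (subset_tsupport _ hne))
  have hpi := Real.pi_pos
  set K := A * M₀ * M₂ with hKdef
  have hK : 0 ≤ K := by positivity
  set D₁ := M₁ * K * (8 * R ^ 2) ^ (1/2 : ℝ) * (2 * Real.pi) with hD₁
  set D₂ := M₁ * K * (2 * Real.pi) * (2 * Real.pi) with hD₂
  have hD₁0 : 0 ≤ D₁ := by positivity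
  have hD₂0 : 0 ≤ D₂ := by positivity
  refine ⟨1 + D₁ + D₂, by positivity, ?_⟩
  intro j k l κ g gθ hg hN
  by_cases hi : Integrable gθ
  swap
  · have h0 : fhat gθ = 0 := by rw [fhat_eq_TT, TT_nonint _ _ hi]
    have hF0 : ∀ y t, FIOresc φ qc a ρ₀ ρ₁ χ j k gθ y t = 0 := by
      intro y t
      simp [FIOresc, h0]
    simp only [hF0]
    exact ⟨by simp, fun t => ⟨aestronglyMeasurable_const, by simp⟩⟩
  have hg2 : MemLp gθ 2 := ⟨hi.1, lt_of_le_of_ne le_top hN⟩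
  set u := fhat gθ with hu
  have hu2 : eLpNorm u 2 volume = ENNReal.ofReal (2 * Real.pi) * eLpNorm gθ 2 volume := by
    rw [hu, fhat_eq_TT, TT_L2 (-1) (by norm_num) gθ hi hg2]; simp
  have huM : MemLp u 2 := by
    refine ⟨?_, ?_⟩
    · rw [hu, fhat_eq_TT]; exact (TT_cont _ _ hi).aestronglyMeasurable
    · rw [hu2]; exact ENNReal.mul_lt_top ENNReal.ofReal_lt_top hg2.2
  set w := (2 : ℝ) ^ (-(l : ℝ)) with hw
  have hwpos : 0 < w := by positivity
  obtain ⟨hSm, hSv⟩ := vol_S κ w R hwpos.le hRpos.le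
  set S := {ξ : ℝ × ℝ | |ξ.2| ≤ R ∧ |ξ.1 - κ * ξ.2| ≤ 2 * w * R} with hSdef
  set c := (2 : ℝ) ^ (j : ℝ) with hc
  have hcpos : 0 < c := by positivity
  -- the amplitude
  let h : ℝ → ℝ × ℝ → ℂ := fun t ξ =>
    Complex.exp (Complex.I * Complex.ofReal (-(c * (t ^ 2 * ξ.2 *
      phasePhiT φ qc (-ξ.1 / (t * ξ.2)) ((2 : ℝ) ^ (-(k : ℝ))))))) *
      a (c * ξ.1, c * ξ.2) t *
      Complex.ofReal (ρ₀ (nrm ξ)) * Complex.ofReal (χ (ξ.1 / ξ.2)) * u ξ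
  have hFT : ∀ y t, FIOresc φ qc a ρ₀ ρ₁ χ j k gθ y t = Complex.ofReal (ρ₁ (y, t)) * TT c (h t) y := by
    intro y t
    unfold FIOresc TT
    congr 1
    congr 1
    ext ξ
    simp only [h]
    rw [← hc, ← hu]
    simp only [← mul_assoc]
    rw [← Complex.exp_add]
    congr 5
    push_cast
    ring
  have hb : ∀ t ∈ Set.Icc (1 / 2 : ℝ) 4, ∀ ξ, ‖h t ξ‖ ≤ K * S.indicator (fun ξ => ‖u ξ‖) ξ := by
    intro t ht ξ
    have e : ‖h t ξ‖ = ‖a (c * ξ.1, c * ξ.2) t‖ * ‖ρ₀ (nrm ξ)‖ * ‖χ (ξ.1 / ξ.2)‖ * ‖u ξ‖ := by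
      simp only [h, norm_mul]
      rw [mul_comm Complex.I, Complex.norm_exp_ofReal_mul_I, one_mul, Complex.norm_real,
        Complex.norm_real]
    rw [e]
    by_cases hξ : ξ ∈ S
    · rw [indicator_of_mem hξ]
      rw [hKdef]
      refine mul_le_mul_of_nonneg_right ?_ (norm_nonneg _)
      refine mul_le_mul (mul_le_mul (ha t ht _) (hM₀ _) (norm_nonneg _) hA0) (hM₂ _)
        (norm_nonneg _) (by positivity)
    · rw [indicator_of_notMem hξ, mul_zero]
      apply le_of_eq
      by_contra hne
      apply hξ
      have n1 : ρ₀ (nrm ξ) ≠ 0 := fun h' => hne (by simp [h'])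
      have n2 : χ (ξ.1 / ξ.2) ≠ 0 := fun h' => hne (by simp [h'])
      have n3 : u ξ ≠ 0 := fun h' => hne (by simp [h'])
      have n4 : ξ ∈ sector κ w := by
        by_contra h'
        exact n3 (by rw [hg ξ, indicator_of_notMem h'])
      have n5 : ξ.2 ≠ 0 := fun h' => n2 (by rw [h', div_zero, hχ0])
      have n6 : |ξ.2| ≤ R := by
        have h1 := hR _ (subset_tsupport _ n1)
        have h2 : |ξ.2| ≤ nrm ξ := Real.abs_le_sqrt (by nlinarith [sq_nonneg ξ.1])
        exact h2.trans ((le_abs_self _).trans h1)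
      refine ⟨n6, ?_⟩
      have n7 : |ξ.1 / ξ.2 - κ| ≤ 2 * w := n4
      have : ξ.1 - κ * ξ.2 = (ξ.1 / ξ.2 - κ) * ξ.2 := by field_simp
      rw [this, abs_mul]
      gcongr
  have hρe : ∀ z, ‖(Complex.ofReal (ρ₁ z))‖ₑ ≤ ENNReal.ofReal M₁ := by
    intro z
    rw [← ofReal_norm, Complex.norm_real]
    exact ENNReal.ofReal_le_ofReal (hM₁ z)
  constructor
  · intro y t
    by_cases ht : t ∈ Set.Icc (1 / 2 : ℝ) 4
    swap
    · rw [hFT, hρ₁0 y t ht]; simp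
    have := (TT_key c hcpos.ne' (h t) u huM S hSm K hK (hb t ht)).1 y
    rw [hFT, enorm_mul]
    calc _ ≤ ENNReal.ofReal M₁ * (ENNReal.ofReal K *
          ((ENNReal.ofReal (8 * R ^ 2 * w)) ^ (1/2 : ℝ) *
            (ENNReal.ofReal (2 * Real.pi) * eLpNorm gθ 2 volume))) := by
          refine mul_le_mul' (hρe _) (this.trans ?_)
          rw [hu2]
          gcongr
      _ = ENNReal.ofReal (D₁ * (2 : ℝ) ^ (-(l : ℝ) / 2)) * eLpNorm gθ 2 volume := by
          rw [ENNReal.ofReal_rpow_of_pos (by positivity)]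
          simp only [← mul_assoc]
          rw [← ENNReal.ofReal_mul hM₁0, ← ENNReal.ofReal_mul (by positivity),
            ← ENNReal.ofReal_mul (by positivity)]
          congr 2
          rw [Real.mul_rpow (by positivity) hwpos.le, hw, ← Real.rpow_mul (by norm_num), hD₁]
          rw [show -(l : ℝ) * (1/2) = -(l : ℝ)/2 by ring]
          ring
      _ ≤ _ := by
          gcongr
          linarith
  · intro t
    by_cases ht : t ∈ Set.Icc (1 / 2 : ℝ) 4
    swap
    · have : ∀ y, FIOresc φ qc a ρ₀ ρ₁ χ j k gθ y t = 0 := by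
        intro y; rw [hFT, hρ₁0 y t ht]; simp
      simp only [this]
      exact ⟨aestronglyMeasurable_const, by simp⟩
    obtain ⟨-, hm, hl⟩ := TT_key c hcpos.ne' (h t) u huM S hSm K hK (hb t ht)
    simp only [hFT]
    have hρc : Continuous ρ₁ := hρ₁.continuous
    refine ⟨AEStronglyMeasurable.mul
      (by fun_prop : Continuous fun y => Complex.ofReal (ρ₁ (y, t))).aestronglyMeasurable hm, ?_⟩
    calc _ ≤ ENNReal.ofReal M₁ * eLpNorm (TT c (h t)) 2 volume := by
          refine eLpNorm_le_mul_eLpNorm_of_ae_le_mul (Filter.Eventually.of_forall fun y => ?_) 2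
          rw [norm_mul, Complex.norm_real]
          gcongr
          exact hM₁ _
      _ ≤ ENNReal.ofReal M₁ * (ENNReal.ofReal (2 * Real.pi / |c|) *
      (ENNReal.ofReal K * (ENNReal.ofReal (2 * Real.pi) * eLpNorm gθ 2 volume))) := by
          rw [← hu2]
          gcongr
      _ = ENNReal.ofReal (D₂ * (2 : ℝ) ^ (-(j : ℝ))) * eLpNorm gθ 2 volume := by
          simp only [← mul_assoc]
          rw [← ENNReal.ofReal_mul hM₁0, ← ENNReal.ofReal_mul (by positivity),
            ← ENNReal.ofReal_mul (by positivity)]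
          congr 2
          rw [abs_of_pos hcpos, Real.rpow_neg (by norm_num), ← hc, hD₂]
          field_simp
      _ ≤ _ := by
          gcongr
          linarith

/-- abstract interpolation -/
theorem interp (P : (ℝ × ℝ) × ℝ → ℂ) (s : ℝ) (hs : 1 ≤ s) (B₁ B₂ : ℝ≥0∞) (hB₂ : B₂ ≠ ⊤)
    (hsup : ∀ z, ‖P z‖ₑ ≤ B₂)
    (hz : ∀ y t, t ∉ Set.Icc (1 / 2 : ℝ) 4 → P (y, t) = 0)
    (h1 : ∀ t, ∫⁻ y, ‖P (y, t)‖ₑ ≤ B₁) :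
    eLpNorm P (ENNReal.ofReal s) volume ≤ (B₂ ^ (s - 1) * (4 * B₁)) ^ (1 / s) := by
  have hs0 : 0 < s := by linarith
  have hL1 : ∫⁻ z, ‖P z‖ₑ ≤ 4 * B₁ := by
    obtain ⟨G, hGm, hGle, hGe⟩ := exists_measurable_le_lintegral_eq volume (fun z => ‖P z‖ₑ)
    rw [hGe, Measure.volume_eq_prod, lintegral_prod_symm _ hGm.aemeasurable]
    calc _ ≤ ∫⁻ t, (Set.Icc (1 / 2 : ℝ) 4).indicator (fun _ => B₁) t := by
          refine lintegral_mono fun t => ?_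
          by_cases ht : t ∈ Set.Icc (1 / 2 : ℝ) 4
          · rw [indicator_of_mem ht]
            exact (lintegral_mono fun y => hGle (y, t)).trans (h1 t)
          · rw [indicator_of_notMem ht]
            calc _ ≤ ∫⁻ y : ℝ × ℝ, (0 : ℝ≥0∞) := by
                  refine lintegral_mono fun y => (hGle (y, t)).trans ?_
                  simp [hz y t ht]
              _ ≤ 0 := by simp
      _ ≤ _ := by
          rw [lintegral_indicator measurableSet_Icc, setLIntegral_const, Real.volume_Icc, mul_comm]
          gcongr
          rw [ENNReal.ofReal_le_iff_le_toReal (by norm_num)]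
          norm_num
  rw [eLpNorm_eq_lintegral_rpow_enorm_toReal (by simpa using hs0) ENNReal.ofReal_ne_top, ENNReal.toReal_ofReal hs0.le]
  gcongr
  calc ∫⁻ z, ‖P z‖ₑ ^ s ≤ ∫⁻ z, B₂ ^ (s - 1) * ‖P z‖ₑ := by
        refine lintegral_mono fun z => ?_
        have : ‖P z‖ₑ ^ s = ‖P z‖ₑ ^ (s - 1) * ‖P z‖ₑ := by
          conv_lhs => rw [show s = (s - 1) + 1 by ring]
          rw [ENNReal.rpow_add_of_nonneg _ _ (by linarith) (by norm_num), ENNReal.rpow_one]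
        simp only [this]
        exact mul_le_mul_left (ENNReal.rpow_le_rpow (hsup z) (by linarith)) _
    _ = B₂ ^ (s - 1) * ∫⁻ z, ‖P z‖ₑ := lintegral_const_mul' _ _
        (ENNReal.rpow_ne_top_of_nonneg (by linarith) hB₂)
    _ ≤ _ := by gcongr

/-- **Lemma 3.2.**  For `j > 2k` and `2^l ≈ 2^{(j-k)/2}`, and two sectors of angular width
`≈ 2^{-l}` at distance `≲ 2^{-l}`, the bilinear estimate
`‖𝓕_j^k g_θ^l 𝓕_j^k g_{θ'}^l‖_{L^{q/p}(ℝ³)} ≤ C 2^{-2jp/q} 2^{-((j-k)/2)(1-p/q)}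
‖g_θ^l‖_{L²} ‖g_{θ'}^l‖_{L²}` holds, with `C` independent of `j, k, l, θ, θ'`. -/
theorem bilinear_estimate_limiting
    (r : ℝ) (hr : 0 < r) (φ : ℝ → ℝ) (hφ : ContDiffOn ℝ (⊤ : ℕ∞) φ (Set.Ioo (-r) r))
    (hφ0 : φ 0 = 1 / 2) (hφ' : deriv φ 0 ≠ 0)
    (c₁ c₂ : ℝ) (hc₁ : 0 < c₁) (hc₁₂ : c₁ ≤ c₂)
    (δ₀ : ℝ) (hδ₀ : 0 < δ₀) (qc : ℝ → ℝ → ℝ)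
    (hqc : ∀ s ∈ Set.Icc c₁ c₂, ∀ δ ∈ Set.Icc (0 : ℝ) δ₀,
      deriv (fun x => phasePhi φ s x δ) (qc s δ) = 0)
    (a : ℝ × ℝ → ℝ → ℂ) (Ca : ℕ → ℝ)
    (ha : ∀ n : ℕ, ∀ t ∈ Set.Icc (1 / 2 : ℝ) 4, ∀ ξ : ℝ × ℝ,
      ‖iteratedFDeriv ℝ n (fun ζ : ℝ × ℝ => a ζ t) ξ‖ ≤ Ca n * (1 + nrm ξ) ^ (-(n : ℝ)))
    (χ : ℝ → ℝ) (hχ : ContDiff ℝ (⊤ : ℕ∞) χ) (hχs : tsupport χ ⊆ Set.Icc c₁ c₂)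
    (ρ₀ : ℝ → ℝ) (hρ₀ : ContDiff ℝ (⊤ : ℕ∞) ρ₀) (hρ₀c : HasCompactSupport ρ₀)
    (ρ₁ : (ℝ × ℝ) × ℝ → ℝ) (hρ₁ : ContDiff ℝ (⊤ : ℕ∞) ρ₁) (hρ₁c : HasCompactSupport ρ₁)
    (hρ₁s : tsupport ρ₁ ⊆ {z : (ℝ × ℝ) × ℝ | z.2 ∈ Set.Icc (1 / 2 : ℝ) 4})
    (p q : ℝ) (hp : 0 < p) (hq : 0 < q)
    (hpq₁ : 1 / (2 * p) < 1 / q) (hpq₂ : 1 / q ≤ 3 / (5 * p))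
    (hpq₃ : 3 / q ≤ 1 - 1 / p) (hpq₄ : 1 / 2 - 1 / p ≤ 1 / q) :
    ∃ C > 0, ∀ j k l : ℕ, 2 * k < j →
      (2 : ℝ) ^ (l : ℝ) ≤ 2 * (2 : ℝ) ^ (((j : ℝ) - (k : ℝ)) / 2) →
      (2 : ℝ) ^ (((j : ℝ) - (k : ℝ)) / 2) ≤ 2 * (2 : ℝ) ^ (l : ℝ) →
      (2 : ℝ) ^ (-(k : ℝ)) ≤ δ₀ →
      ∀ κ κ' : ℝ, κ ∈ Set.Icc c₁ c₂ → κ' ∈ Set.Icc c₁ c₂ →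
        |κ - κ'| ≤ 64 * (2 : ℝ) ^ (-(l : ℝ)) →
      ∀ g gθ gθ' : ℝ × ℝ → ℂ,
        (∀ ξ, fhat gθ ξ =
          Set.indicator (sector κ ((2 : ℝ) ^ (-(l : ℝ)))) (fhat g) ξ) →
        (∀ ξ, fhat gθ' ξ =
          Set.indicator (sector κ' ((2 : ℝ) ^ (-(l : ℝ)))) (fhat g) ξ) →
        eLpNorm (fun z : (ℝ × ℝ) × ℝ =>
            FIOresc φ qc a ρ₀ ρ₁ χ j k gθ z.1 z.2 *
              FIOresc φ qc a ρ₀ ρ₁ χ j k gθ' z.1 z.2)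
            (ENNReal.ofReal (q / p)) volume ≤
          ENNReal.ofReal (C * (2 : ℝ) ^ (-2 * (j : ℝ) * (p / q)) *
              (2 : ℝ) ^ (-(((j : ℝ) - (k : ℝ)) / 2) * (1 - p / q))) *
            eLpNorm gθ 2 volume * eLpNorm gθ' 2 volume := by
  obtain ⟨C₁, hC₁, hF⟩ := FIO_bound φ c₁ c₂ hc₁ qc a (Ca 0)
    (fun t ht ξ => by simpa using ha 0 t ht ξ) χ hχ hχs ρ₀ hρ₀ hρ₀c ρ₁ hρ₁ hρ₁c hρ₁s
  have hs : 1 ≤ q / p := by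
    rw [div_le_div_iff₀ hq (by positivity)] at hpq₂
    rw [le_div_iff₀ hp]
    linarith
  refine ⟨8 * C₁ ^ 2, by positivity, ?_⟩
  intro j k l hjk hl1 hl2 hkδ κ κ' hκ hκ' hκκ g gθ gθ' hg hg'
  set Cst := 8 * C₁ ^ 2 * (2 : ℝ) ^ (-2 * (j : ℝ) * (p / q)) *
              (2 : ℝ) ^ (-(((j : ℝ) - (k : ℝ)) / 2) * (1 - p / q)) with hCst
  have hCstpos : 0 < Cst := by positivity
  have hCst0 : ENNReal.ofReal Cst ≠ 0 := by simpa using hCstpos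
  have hz : ∀ (g : ℝ × ℝ → ℂ) y t, t ∉ Set.Icc (1 / 2 : ℝ) 4 →
      FIOresc φ qc a ρ₀ ρ₁ χ j k g y t = 0 := by
    intro g y t ht
    have : ρ₁ (y, t) = 0 := by
      by_contra hne
      exact ht (hρ₁s (subset_tsupport _ hne))
    simp [FIOresc, this]
  by_cases hN : eLpNorm gθ 2 volume = ⊤
  · by_cases hN' : eLpNorm gθ' 2 volume = 0
    · have h0 := (hF j k l κ' g gθ' hg' (by simp [hN'])).1
      have h0' : ∀ y t, FIOresc φ qc a ρ₀ ρ₁ χ j k gθ' y t = 0 := by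
        intro y t
        have := h0 y t
        rw [hN', mul_zero] at this
        simpa using this
      simp [h0']
    · rw [hN, ENNReal.mul_top hCst0, ENNReal.top_mul hN']
      exact le_top
  by_cases hN' : eLpNorm gθ' 2 volume = ⊤
  · by_cases hN0 : eLpNorm gθ 2 volume = 0
    · have h0 := (hF j k l κ g gθ hg (by simp [hN0])).1
      have h0' : ∀ y t, FIOresc φ qc a ρ₀ ρ₁ χ j k gθ y t = 0 := by
        intro y t
        have := h0 y t
        rw [hN0, mul_zero] at this
        simpa using this
      simp [h0']
    · rw [hN', ENNReal.mul_top (mul_ne_zero hCst0 hN0)]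
      exact le_top
  obtain ⟨hs1, hs2⟩ := hF j k l κ g gθ hg hN
  obtain ⟨hs1', hs2'⟩ := hF j k l κ' g gθ' hg' hN'
  set n := (eLpNorm gθ 2 volume).toReal with hn
  set n' := (eLpNorm gθ' 2 volume).toReal with hn'
  have hn0 : 0 ≤ n := ENNReal.toReal_nonneg
  have hn0' : 0 ≤ n' := ENNReal.toReal_nonneg
  rw [← ENNReal.ofReal_toReal hN, ← hn] at hs1 hs2 ⊢
  rw [← ENNReal.ofReal_toReal hN', ← hn'] at hs1' hs2' ⊢
  set s := q / p with hsdef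
  have hpq : p / q = s⁻¹ := by rw [hsdef, inv_div]
  have hs0 : 0 < s := by linarith
  set D := C₁ ^ 2 * (n * n') with hD
  have hD0 : 0 ≤ D := by positivity
  set v := (2 : ℝ) ^ (-(l : ℝ)) with hv
  set V := (2 : ℝ) ^ (-(((j : ℝ) - (k : ℝ)) / 2)) with hV
  set e := (2 : ℝ) ^ (-2 * (j : ℝ)) with he
  have hv0 : 0 < v := by positivity
  have hV0 : 0 < V := by positivity
  have he0 : 0 < e := by positivity
  have hvV : v ≤ 2 * V := by
    rw [hv, hV, Real.rpow_neg (by norm_num), Real.rpow_neg (by norm_num)]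
    rw [inv_le_iff_one_le_mul₀ (by positivity), mul_comm, ← mul_assoc, ← div_eq_mul_inv,
      one_le_div (by positivity), mul_comm]
    exact hl2
  have key := interp (fun z => FIOresc φ qc a ρ₀ ρ₁ χ j k gθ z.1 z.2 *
              FIOresc φ qc a ρ₀ ρ₁ χ j k gθ' z.1 z.2) s hs (ENNReal.ofReal (D * e))
              (ENNReal.ofReal (D * v)) ENNReal.ofReal_ne_top
    (by
      intro z
      rw [enorm_mul]
      refine (mul_le_mul' (hs1 z.1 z.2) (hs1' z.1 z.2)).trans (le_of_eq ?_)
      rw [← ENNReal.ofReal_mul (by positivity), ← ENNReal.ofReal_mul (by positivity),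
        ← ENNReal.ofReal_mul (by positivity)]
      congr 1
      have : v = (2 : ℝ) ^ (-(l : ℝ) / 2) * (2 : ℝ) ^ (-(l : ℝ) / 2) := by
        rw [← Real.rpow_add (by norm_num), hv]; congr 1; ring
      rw [this, hD]; ring)
    (by
      intro y t ht
      simp [hz gθ y t ht])
    (by
      intro t
      have hH := eLpNorm_smul_le_mul_eLpNorm (p := 2) (q := 2) (r := 1) (hs2' t).1 (hs2 t).1
      rw [eLpNorm_one_eq_lintegral_enorm] at hH
      refine hH.trans ((mul_le_mul' (hs2 t).2 (hs2' t).2).trans (le_of_eq ?_))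
      rw [← ENNReal.ofReal_mul (by positivity), ← ENNReal.ofReal_mul (by positivity),
        ← ENNReal.ofReal_mul (by positivity)]
      congr 1
      have : e = (2 : ℝ) ^ (-(j : ℝ)) * (2 : ℝ) ^ (-(j : ℝ)) := by
        rw [← Real.rpow_add (by norm_num), he]; congr 1; ring
      rw [this, hD]; ring)
  refine key.trans ?_
  rw [ENNReal.ofReal_rpow_of_nonneg (by positivity) (by linarith),
    show (4 : ℝ≥0∞) = ENNReal.ofReal 4 by norm_num,
    ← ENNReal.ofReal_mul (by positivity), ← ENNReal.ofReal_mul (by positivity),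
    ENNReal.ofReal_rpow_of_nonneg (by positivity) (by positivity),
    ← ENNReal.ofReal_mul (by positivity), ← ENNReal.ofReal_mul (by positivity)]
  apply ENNReal.ofReal_le_ofReal
  have hC : Cst * n * n' = 8 * D * e ^ s⁻¹ * V ^ (1 - s⁻¹) := by
    rw [hCst, hpq, he, hV, ← Real.rpow_mul (by norm_num), ← Real.rpow_mul (by norm_num), hD]
    ring
  rw [hC, one_div, Real.rpow_inv_le_iff_of_pos (by positivity) (by positivity) hs0]
  have hR : (8 * D * e ^ s⁻¹ * V ^ (1 - s⁻¹)) ^ s = 8 ^ s * D ^ s * e * V ^ (s - 1) := by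
    rw [Real.mul_rpow (by positivity) (by positivity), Real.mul_rpow (by positivity) (by positivity),
      Real.mul_rpow (by positivity) (by positivity), ← Real.rpow_mul he0.le,
      ← Real.rpow_mul hV0.le, inv_mul_cancel₀ hs0.ne', Real.rpow_one, sub_mul,
      inv_mul_cancel₀ hs0.ne', one_mul]
  have hDs : D ^ s = D ^ (s - 1) * D := by
    conv_lhs => rw [show s = (s - 1) + 1 by ring]
    rw [Real.rpow_add_of_nonneg hD0 (by linarith) (by norm_num), Real.rpow_one]
  have h8 : (8 : ℝ) ^ s = 8 ^ (s - 1) * 8 := by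
    conv_lhs => rw [show s = (s - 1) + 1 by ring]
    rw [Real.rpow_add_of_nonneg (by norm_num) (by linarith) (by norm_num), Real.rpow_one]
  have hv1 : v ^ (s - 1) ≤ 8 ^ (s - 1) * V ^ (s - 1) := by
    rw [← Real.mul_rpow (by norm_num) hV0.le]
    exact Real.rpow_le_rpow hv0.le (by linarith) (by linarith)
  rw [hR, hDs, h8, Real.mul_rpow hD0 hv0.le]
  calc D ^ (s - 1) * v ^ (s - 1) * (4 * (D * e))
      ≤ D ^ (s - 1) * (8 ^ (s - 1) * V ^ (s - 1)) * (8 * (D * e)) := by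
        gcongr
        norm_num
    _ = _ := by ring
end

section
/- For every l, j, k and every sector piece g_θ^l (with ĝ_θ^l supported in a sector C_θ^l of angular width ≈ 2^{−l} where ξ₁/ξ₂ ≈ 1), the following three estimates hold with constants independent of l, j, k, θ: (i) ‖𝓕_j^k g_θ^l‖_{L²(ℝ³)} ≤ C 2^{−j} ‖ĝ_θ^l‖_{L²(ℝ²)}; (ii) ‖𝓕_j^k g_θ^l‖_{L^∞(ℝ³)} ≤ C 2^{−l} ‖ĝ_θ^l‖_{L^∞(ℝ²)}; (iii) ‖𝓕_j^k g_θ^l‖_{L^∞(ℝ³)} ≤ ‖ĝ_θ^l‖_{L¹(ℝ²)}. -/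
open MeasureTheory Set
open scoped ENNReal

section
open scoped FourierTransform SchwartzMap ContDiff
lemma planch (h : ℂ → ℂ) (h1 : Integrable h) (h2 : MemLp h 2 volume) :
    eLpNorm (𝓕 h) 2 volume = eLpNorm h 2 volume := by
  set f : Lp (α := ℂ) ℂ 2 volume := h2.toLp h with hf
  have hfh : f =ᵐ[volume] h := h2.coeFn_toLp
  have key : ((𝓕 f : Lp (α := ℂ) ℂ 2 volume) : ℂ → ℂ) =ᵐ[volume] 𝓕 h := by
    apply ae_eq_of_integral_contDiff_smul_eq
    · exact (Lp.memLp (𝓕 f)).locallyIntegrable (by norm_num)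
    · have : Continuous (𝓕 h) := by
        exact VectorFourier.fourierIntegral_continuous Real.continuous_fourierChar (by exact continuous_inner) h1
      exact this.locallyIntegrable
    · intro g gs gc
      have hg₁ : HasCompactSupport (Complex.ofRealCLM ∘ g) := gc.comp_left rfl
      have hg₂ : ContDiff ℝ ∞ (Complex.ofRealCLM ∘ g) := by fun_prop
      set ψ : 𝓢(ℂ, ℂ) := hg₁.toSchwartzMap hg₂ with hψ
      have e := congrArg (fun T => T ψ) (Lp.fourier_toTemperedDistribution_eq f)
      simp only [TemperedDistribution.fourier_apply, Lp.toTemperedDistribution_apply] at e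
      have e1 : ∫ x, g x • (𝓕 f : Lp (α := ℂ) ℂ 2 volume) x = ∫ x, ψ x • (𝓕 f : Lp (α := ℂ) ℂ 2 volume) x := by
        simp [hψ]
      have e2 : ∫ x, g x • (𝓕 h) x = ∫ x, ψ x • (𝓕 h) x := by
        simp [hψ]
      rw [e1, e2, ← e]
      have e3 : ∫ x, (𝓕 ψ) x • f x = ∫ x, (𝓕 ψ) x • h x := by
        apply integral_congr_ae
        filter_upwards [hfh] with x hx
        rw [hx]
      rw [e3, SchwartzMap.fourier_coe]
      have := VectorFourier.integral_fourierIntegral_smul_eq_flip (e := Real.fourierChar) (μ := volume) (ν := volume) (L := innerₗ ℂ) (f := ψ) (g := h) Real.continuous_fourierChar (by exact continuous_inner) ψ.integrable h1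
      rw [flip_innerₗ] at this
      exact this
  rw [← eLpNorm_congr_ae key, ← eLpNorm_congr_ae hfh]
  have := Lp.norm_fourier_eq f
  rw [Lp.norm_def, Lp.norm_def] at this
  exact (ENNReal.toReal_eq_toReal_iff' (Lp.eLpNorm_ne_top _) (Lp.eLpNorm_ne_top _)).1 this

lemma planch2 (H : ℝ × ℝ → ℂ) (h1 : Integrable H) (h2 : MemLp H 2 volume) (lam : ℝ) (hl : 0 < lam) :
    ∫⁻ y : ℝ × ℝ, ‖∫ ξ : ℝ × ℝ, Complex.exp (Complex.I * Complex.ofReal (lam *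
        (ξ.1 * y.1 + ξ.2 * y.2))) * H ξ‖ₑ ^ 2 =
      ENNReal.ofReal ((2 * Real.pi / lam) ^ 2) * ∫⁻ ξ, ‖H ξ‖ₑ ^ 2 := by
  have mp := Complex.volume_preserving_equiv_real_prod
  set e := Complex.measurableEquivRealProd with he
  have hp : 0 < Real.pi := Real.pi_pos
  set h : ℂ → ℂ := H ∘ e with hh
  have k1 : Integrable h := (mp.integrable_comp_emb e.measurableEmbedding).2 h1
  have k2 : MemLp h 2 volume := h2.comp_measurePreserving mp
  have pl := planch h k1 k2
  have sq : ∀ f : ℂ → ℂ, eLpNorm f 2 volume ^ 2 = ∫⁻ x, ‖f x‖ₑ ^ 2 := by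
    intro f
    have := eLpNorm_nnreal_pow_eq_lintegral (f := f) (p := 2) (μ := volume) (by norm_num)
    simpa using this
  have pl2 : ∫⁻ x, ‖𝓕 h x‖ₑ ^ 2 = ∫⁻ x, ‖h x‖ₑ ^ 2 := by rw [← sq, ← sq, pl]
  have r1 : ∫⁻ x, ‖h x‖ₑ ^ 2 = ∫⁻ ξ, ‖H ξ‖ₑ ^ 2 :=
    mp.lintegral_comp_emb e.measurableEmbedding (fun ξ => ‖H ξ‖ₑ ^ 2)
  rw [← r1, ← pl2]
  set c : ℝ := -(lam / (2 * Real.pi)) with hc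
  have hc0 : c ≠ 0 := by rw [hc]; exact neg_ne_zero.2 (by positivity)
  rw [← mp.lintegral_comp_emb e.measurableEmbedding]
  have pt : ∀ v : ℂ, (∫ ξ : ℝ × ℝ, Complex.exp (Complex.I * Complex.ofReal (lam *
        (ξ.1 * (e v).1 + ξ.2 * (e v).2))) * H ξ) = 𝓕 h (c • v) := by
    intro v
    rw [Real.fourier_eq', ← mp.integral_comp e.measurableEmbedding]
    congr 1
    ext w
    simp only [he, Complex.measurableEquivRealProd_apply, hh, Function.comp, smul_eq_mul]
    congr 2
    have : inner ℝ w (c • v) = c * (w.re * v.re + w.im * v.im) := by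
      rw [inner_smul_right, Complex.inner]
      simp
      left; ring
    rw [this, mul_comm Complex.I]
    congr 2
    rw [hc]; field_simp
  simp_rw [pt]
  have hm : Continuous (𝓕 h) :=
    VectorFourier.fourierIntegral_continuous Real.continuous_fourierChar (by exact continuous_inner) k1
  have hmm : Measurable (fun x => ‖𝓕 h x‖ₑ ^ 2) := by fun_prop
  have := lintegral_map (μ := volume) hmm (measurable_const_smul c : Measurable (fun x : ℂ => c • x))
  rw [← this, Measure.map_addHaar_smul _ hc0, lintegral_smul_measure, smul_eq_mul]
  congr 2
  rw [Complex.finrank_real_complex, abs_of_nonneg (by positivity), hc]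
  field_simp

lemma planch3 (H G : ℝ × ℝ → ℂ) (B : ℝ) (hB : 0 < B) (hHG : ∀ ξ, ‖H ξ‖ ≤ B * ‖G ξ‖)
    (lam : ℝ) (hl : 0 < lam) :
    ∫⁻ y : ℝ × ℝ, ‖∫ ξ : ℝ × ℝ, Complex.exp (Complex.I * Complex.ofReal (lam *
        (ξ.1 * y.1 + ξ.2 * y.2))) * H ξ‖ₑ ^ 2 ≤
      ENNReal.ofReal ((2 * Real.pi * B / lam) ^ 2) * ∫⁻ ξ, ‖G ξ‖ₑ ^ 2 := by
  have hp : 0 < Real.pi := Real.pi_pos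
  by_cases h1 : Integrable H
  swap
  · have : ∀ y : ℝ × ℝ, (∫ ξ : ℝ × ℝ, Complex.exp (Complex.I * Complex.ofReal (lam *
        (ξ.1 * y.1 + ξ.2 * y.2))) * H ξ) = 0 := by
      intro y
      apply integral_undef
      contrapose! h1
      have := h1.bdd_mul (c := 1) (f := fun ξ : ℝ × ℝ => Complex.exp (Complex.I * Complex.ofReal (-(lam *
        (ξ.1 * y.1 + ξ.2 * y.2))))) (Continuous.aestronglyMeasurable (by fun_prop))
        (by refine Filter.Eventually.of_forall fun x => ?_
            rw [mul_comm, Complex.norm_exp_ofReal_mul_I])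
      refine this.congr (Filter.Eventually.of_forall fun x => ?_)
      simp only
      rw [← mul_assoc, ← Complex.exp_add]
      simp
    simp_rw [this]
    simp
  by_cases hG : ∫⁻ ξ, ‖G ξ‖ₑ ^ 2 = ⊤
  · rw [hG, ENNReal.mul_top]
    · exact le_top
    · simp only [ne_eq, ENNReal.ofReal_eq_zero, not_le]; positivity
  have le : ∫⁻ ξ, ‖H ξ‖ₑ ^ 2 ≤ ENNReal.ofReal (B ^ 2) * ∫⁻ ξ, ‖G ξ‖ₑ ^ 2 := by
    rw [← lintegral_const_mul' _ _ ENNReal.ofReal_ne_top]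
    refine lintegral_mono fun ξ => ?_
    rw [ENNReal.ofReal_pow hB.le, ← mul_pow]
    gcongr
    rw [← ofReal_norm, ← ofReal_norm, ← ENNReal.ofReal_mul hB.le]
    exact ENNReal.ofReal_le_ofReal (hHG ξ)
  have h2 : MemLp H 2 volume := by
    refine ⟨h1.1, ?_⟩
    have := eLpNorm_nnreal_pow_eq_lintegral (f := H) (p := 2) (μ := volume) (by norm_num)
    simp at this
    have h3 : eLpNorm H 2 volume ^ 2 < ⊤ := by
      rw [this]
      exact le.trans_lt (ENNReal.mul_lt_top ENNReal.ofReal_lt_top (lt_top_iff_ne_top.2 hG))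
    simpa using h3
  rw [planch2 H h1 h2 lam hl]
  calc _ ≤ ENNReal.ofReal ((2 * Real.pi / lam) ^ 2) * (ENNReal.ofReal (B ^ 2) * ∫⁻ ξ, ‖G ξ‖ₑ ^ 2) := by gcongr
    _ = _ := by
      rw [← mul_assoc, ← ENNReal.ofReal_mul (by positivity)]
      congr 2; ring
end

lemma vol_strip (κ w R : ℝ) (hw : 0 ≤ w) (hR : 0 ≤ R) :
    volume {ξ : ℝ × ℝ | |ξ.2| ≤ R ∧ |ξ.1 - κ * ξ.2| ≤ 2 * w * R} ≤
      ENNReal.ofReal (8 * R ^ 2 * w) := by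
  have hm : MeasurableSet {ξ : ℝ × ℝ | |ξ.2| ≤ R ∧ |ξ.1 - κ * ξ.2| ≤ 2 * w * R} := by
    have q1 : Continuous fun ξ : ℝ × ℝ => |ξ.2| := by fun_prop
    have q2 : Continuous fun ξ : ℝ × ℝ => |ξ.1 - κ * ξ.2| := by fun_prop
    exact ((isClosed_le q1 continuous_const).inter
      (isClosed_le q2 continuous_const)).measurableSet
  rw [Measure.volume_eq_prod, Measure.prod_apply_symm hm]
  calc _ ≤ ∫⁻ y : ℝ, (Set.Icc (-R) R).indicator (fun _ => ENNReal.ofReal (4 * w * R)) y := by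
        refine lintegral_mono fun y => ?_
        by_cases hy : y ∈ Set.Icc (-R) R
        · rw [Set.indicator_of_mem hy]
          calc _ ≤ volume (Set.Icc (κ * y - 2 * w * R) (κ * y + 2 * w * R)) := by
                apply measure_mono
                intro x hx
                have := abs_le.1 hx.2
                simp only at this
                constructor <;> linarith [this.1, this.2]
            _ ≤ _ := by
                rw [Real.volume_Icc]
                apply ENNReal.ofReal_le_ofReal
                linarith
        · rw [Set.indicator_of_notMem hy]
          have : (fun x : ℝ => (x, y)) ⁻¹' {ξ : ℝ × ℝ | |ξ.2| ≤ R ∧ |ξ.1 - κ * ξ.2| ≤ 2 * w * R} = ∅ := by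
            ext x
            simp only [Set.mem_preimage, Set.mem_ofPred_eq, Set.mem_empty_iff_false, iff_false]
            intro h
            exact hy (abs_le.1 h.1)
          rw [this]
          simp
    _ = _ := by
        rw [lintegral_indicator measurableSet_Icc, setLIntegral_const, Real.volume_Icc,
          ← ENNReal.ofReal_mul (by positivity)]
        congr 1; ring

lemma bdd_of_cs {X : Type*} [TopologicalSpace X] (f : X → ℝ) (hf : Continuous f)
    (hc : HasCompactSupport f) : ∃ M > 0, ∀ x, ‖f x‖ ≤ M := by
  obtain ⟨M, hM⟩ := hc.exists_bound_of_continuous hf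
  exact ⟨max M 1, by positivity, fun x => (hM x).trans (le_max_left _ _)⟩

/-- **Basic estimates (3.7)–(3.9).**  For every `l, j, k` and every sector piece `g_θ^l`
(i.e. a function whose Fourier transform is supported in a sector of angular width
`≈ 2^{-l}` on which `ξ₁/ξ₂ ≈ 1`), one has
(i) `‖𝓕_j^k g_θ^l‖_{L²(ℝ³)} ≤ C 2^{-j} ‖ĝ_θ^l‖_{L²(ℝ²)}`,
(ii) `‖𝓕_j^k g_θ^l‖_{L^∞(ℝ³)} ≤ C 2^{-l} ‖ĝ_θ^l‖_{L^∞(ℝ²)}`,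
(iii) `‖𝓕_j^k g_θ^l‖_{L^∞(ℝ³)} ≤ C ‖ĝ_θ^l‖_{L¹(ℝ²)}`,
with constants independent of `l, j, k, θ`. -/
theorem basic_estimates_sector
    (r : ℝ) (hr : 0 < r) (φ : ℝ → ℝ) (hφ : ContDiffOn ℝ (⊤ : ℕ∞) φ (Set.Ioo (-r) r))
    (hφ0 : φ 0 = 1 / 2) (hφ' : deriv φ 0 ≠ 0)
    (c₁ c₂ : ℝ) (hc₁ : 0 < c₁) (hc₁₂ : c₁ ≤ c₂)
    (δ₀ : ℝ) (hδ₀ : 0 < δ₀) (qc : ℝ → ℝ → ℝ)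
    (hqc : ∀ s ∈ Set.Icc c₁ c₂, ∀ δ ∈ Set.Icc (0 : ℝ) δ₀,
      deriv (fun x => phasePhi φ s x δ) (qc s δ) = 0)
    (a : ℝ × ℝ → ℝ → ℂ) (Ca : ℕ → ℝ)
    (ha : ∀ n : ℕ, ∀ t ∈ Set.Icc (1 / 2 : ℝ) 4, ∀ ξ : ℝ × ℝ,
      ‖iteratedFDeriv ℝ n (fun ζ : ℝ × ℝ => a ζ t) ξ‖ ≤ Ca n * (1 + nrm ξ) ^ (-(n : ℝ)))
    (χ : ℝ → ℝ) (hχ : ContDiff ℝ (⊤ : ℕ∞) χ) (hχs : tsupport χ ⊆ Set.Icc c₁ c₂)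
    (ρ₀ : ℝ → ℝ) (hρ₀ : ContDiff ℝ (⊤ : ℕ∞) ρ₀) (hρ₀c : HasCompactSupport ρ₀)
    (ρ₁ : (ℝ × ℝ) × ℝ → ℝ) (hρ₁ : ContDiff ℝ (⊤ : ℕ∞) ρ₁) (hρ₁c : HasCompactSupport ρ₁)
    (hρ₁s : tsupport ρ₁ ⊆ {z : (ℝ × ℝ) × ℝ | z.2 ∈ Set.Icc (1 / 2 : ℝ) 4}) :
    ∃ C > 0, ∀ j k l : ℕ, (2 : ℝ) ^ (-(k : ℝ)) ≤ δ₀ →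
      ∀ κ : ℝ, κ ∈ Set.Icc c₁ c₂ →
      ∀ g : ℝ × ℝ → ℂ,
        Function.support (fhat g) ⊆ sector κ ((2 : ℝ) ^ (-(l : ℝ))) →
        eLpNorm (fun z : (ℝ × ℝ) × ℝ => FIOresc φ qc a ρ₀ ρ₁ χ j k g z.1 z.2)
            2 volume ≤
          ENNReal.ofReal (C * (2 : ℝ) ^ (-(j : ℝ))) * eLpNorm (fhat g) 2 volume ∧
        eLpNorm (fun z : (ℝ × ℝ) × ℝ => FIOresc φ qc a ρ₀ ρ₁ χ j k g z.1 z.2)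
            ⊤ volume ≤
          ENNReal.ofReal (C * (2 : ℝ) ^ (-(l : ℝ))) * eLpNorm (fhat g) ⊤ volume ∧
        eLpNorm (fun z : (ℝ × ℝ) × ℝ => FIOresc φ qc a ρ₀ ρ₁ χ j k g z.1 z.2)
            ⊤ volume ≤
          ENNReal.ofReal C * eLpNorm (fhat g) 1 volume := by
  obtain ⟨M₁, hM₁, bρ₁⟩ := bdd_of_cs ρ₁ hρ₁.continuous hρ₁c
  obtain ⟨M₀, hM₀, bρ₀⟩ := bdd_of_cs ρ₀ hρ₀.continuous hρ₀c
  have hχc : HasCompactSupport χ :=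
    isCompact_Icc.of_isClosed_subset (isClosed_tsupport χ) hχs
  obtain ⟨Mχ, hMχ, bχ⟩ := bdd_of_cs χ hχ.continuous hχc
  obtain ⟨A, hA, ba⟩ : ∃ A > 0, ∀ t ∈ Set.Icc (1 / 2 : ℝ) 4, ∀ ξ : ℝ × ℝ, ‖a ξ t‖ ≤ A := by
    refine ⟨max (Ca 0) 1, by positivity, fun t ht ξ => ?_⟩
    have := ha 0 t ht ξ
    rw [norm_iteratedFDeriv_zero] at this
    simp only [CharP.cast_eq_zero, neg_zero, Real.rpow_zero, mul_one] at this
    exact this.trans (le_max_left _ _)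
  obtain ⟨R, hR, bR⟩ : ∃ R > 0, ∀ x, ρ₀ x ≠ 0 → |x| ≤ R := by
    obtain ⟨R, hR⟩ := hρ₀c.isCompact.isBounded.exists_norm_le
    refine ⟨max R 1, by positivity, fun x hx => ?_⟩
    exact (hR x (subset_tsupport _ hx)).trans (le_max_left _ _)
  set K := A * M₀ * Mχ with hK
  have hK0 : 0 < K := by positivity
  have hpi := Real.pi_pos
  refine ⟨M₁ * K * (4 * Real.pi + 8 * R ^ 2 + 1), by positivity, ?_⟩
  intro j k l _ κ _ g hg
  set w : ℝ := (2 : ℝ) ^ (-(l : ℝ)) with hw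
  have hw0 : 0 < w := by positivity
  set lam : ℝ := (2 : ℝ) ^ (j : ℝ) with hlam
  have hlam0 : 0 < lam := by positivity
  set H : ℝ → ℝ × ℝ → ℂ := fun t ξ =>
    Complex.exp (Complex.I * Complex.ofReal (-(lam * (t ^ 2 * ξ.2 *
      phasePhiT φ qc (-ξ.1 / (t * ξ.2)) ((2 : ℝ) ^ (-(k : ℝ))))))) *
      a (lam * ξ.1, lam * ξ.2) t *
      Complex.ofReal (ρ₀ (nrm ξ)) * Complex.ofReal (χ (ξ.1 / ξ.2)) * fhat g ξ with hH
  have hF : ∀ y t, FIOresc φ qc a ρ₀ ρ₁ χ j k g y t = Complex.ofReal (ρ₁ (y, t)) *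
      ∫ ξ : ℝ × ℝ, Complex.exp (Complex.I * Complex.ofReal (lam *
        (ξ.1 * y.1 + ξ.2 * y.2))) * H t ξ := by
    intro y t
    unfold FIOresc
    congr 2
    ext ξ
    simp only [hH, ← mul_assoc]
    rw [← Complex.exp_add]
    congr 5
    rw [← hlam]
    push_cast
    ring
  have hHb : ∀ t ∈ Set.Icc (1 / 2 : ℝ) 4, ∀ ξ, ‖H t ξ‖ ≤ K * ‖fhat g ξ‖ := by
    intro t ht ξ
    simp only [hH, norm_mul]
    rw [mul_comm Complex.I, Complex.norm_exp_ofReal_mul_I, one_mul, Complex.norm_real,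
      Complex.norm_real, hK]
    gcongr
    · exact ba t ht _
    · exact bρ₀ _
    · exact bχ _
  have hF0 : ∀ y t, t ∉ Set.Icc (1 / 2 : ℝ) 4 → FIOresc φ qc a ρ₀ ρ₁ χ j k g y t = 0 := by
    intro y t ht
    have : ρ₁ (y, t) = 0 := by
      by_contra h
      exact ht (hρ₁s (subset_tsupport _ h))
    rw [hF, this]; simp
  have hsup : ∀ t ∈ Set.Icc (1 / 2 : ℝ) 4, ∀ ξ, H t ξ ≠ 0 →
      ξ ∈ {ξ : ℝ × ℝ | |ξ.2| ≤ R ∧ |ξ.1 - κ * ξ.2| ≤ 2 * w * R} := by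
    intro t ht ξ h
    simp only [hH] at h
    have h1 : fhat g ξ ≠ 0 := right_ne_zero_of_mul h
    have h2 := right_ne_zero_of_mul (left_ne_zero_of_mul h)
    have h3 := right_ne_zero_of_mul (left_ne_zero_of_mul (left_ne_zero_of_mul h))
    rw [Complex.ofReal_ne_zero] at h2 h3
    have h4 : 0 < ξ.1 / ξ.2 := lt_of_lt_of_le hc₁ (hχs (subset_tsupport _ h2)).1
    have h5 : ξ.2 ≠ 0 := by
      rintro h5
      rw [h5] at h4; simp at h4
    have h6 : |ξ.2| ≤ R := by
      refine le_trans ?_ ((le_abs_self _).trans (bR _ h3))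
      unfold nrm
      apply Real.abs_le_sqrt
      nlinarith [sq_nonneg ξ.1]
    have h7 : |ξ.1 / ξ.2 - κ| ≤ 2 * w := hg h1
    refine ⟨h6, ?_⟩
    have : ξ.1 - κ * ξ.2 = (ξ.1 / ξ.2 - κ) * ξ.2 := by field_simp
    rw [this, abs_mul]
    gcongr
  have hpt : ∀ y, ∀ t ∈ Set.Icc (1 / 2 : ℝ) 4, ‖FIOresc φ qc a ρ₀ ρ₁ χ j k g y t‖ₑ ≤
      ENNReal.ofReal (M₁ * K) *
        ∫⁻ ξ in {ξ : ℝ × ℝ | |ξ.2| ≤ R ∧ |ξ.1 - κ * ξ.2| ≤ 2 * w * R}, ‖fhat g ξ‖ₑ := by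
    intro y t ht
    have hm : MeasurableSet {ξ : ℝ × ℝ | |ξ.2| ≤ R ∧ |ξ.1 - κ * ξ.2| ≤ 2 * w * R} := by
      have q1 : Continuous fun ξ : ℝ × ℝ => |ξ.2| := by fun_prop
      have q2 : Continuous fun ξ : ℝ × ℝ => |ξ.1 - κ * ξ.2| := by fun_prop
      exact ((isClosed_le q1 continuous_const).inter
        (isClosed_le q2 continuous_const)).measurableSet
    rw [hF, enorm_mul, ENNReal.ofReal_mul hM₁.le, mul_assoc]
    gcongr
    · rw [← ofReal_norm, Complex.norm_real]
      exact ENNReal.ofReal_le_ofReal (bρ₁ _)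
    · refine (enorm_integral_le_lintegral_enorm _).trans ?_
      rw [← lintegral_const_mul' _ _ ENNReal.ofReal_ne_top, ← lintegral_indicator hm]
      refine lintegral_mono fun ξ => ?_
      by_cases h0 : H t ξ = 0
      · simp [h0]
      · rw [Set.indicator_of_mem (hsup t ht ξ h0), ← ofReal_norm, ← ofReal_norm,
          ← ENNReal.ofReal_mul hK0.le]
        apply ENNReal.ofReal_le_ofReal
        rw [norm_mul, mul_comm Complex.I, Complex.norm_exp_ofReal_mul_I, one_mul]
        exact hHb t ht ξ
  have hinf : ∀ D : ℝ≥0∞, ENNReal.ofReal (M₁ * K) *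
        ∫⁻ ξ in {ξ : ℝ × ℝ | |ξ.2| ≤ R ∧ |ξ.1 - κ * ξ.2| ≤ 2 * w * R}, ‖fhat g ξ‖ₑ ≤ D →
      eLpNorm (fun z : (ℝ × ℝ) × ℝ => FIOresc φ qc a ρ₀ ρ₁ χ j k g z.1 z.2) ⊤ volume ≤ D := by
    intro D hD
    rw [eLpNorm_exponent_top]
    refine eLpNormEssSup_le_of_ae_enorm_bound (Filter.Eventually.of_forall fun z => ?_)
    by_cases ht : z.2 ∈ Set.Icc (1 / 2 : ℝ) 4
    · exact (hpt _ _ ht).trans hD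
    · rw [hF0 _ _ ht]; simp
  refine ⟨?_, hinf _ ?_, hinf _ ?_⟩
  · have sqF := eLpNorm_nnreal_pow_eq_lintegral
      (f := fun z : (ℝ × ℝ) × ℝ => FIOresc φ qc a ρ₀ ρ₁ χ j k g z.1 z.2) (p := 2)
      (μ := volume) (by norm_num)
    have sqG := eLpNorm_nnreal_pow_eq_lintegral
      (f := fhat g) (p := 2) (μ := volume) (by norm_num)
    simp only [NNReal.coe_ofNat, ENNReal.rpow_ofNat, ENNReal.coe_ofNat] at sqF sqG
    have hfix : ∀ t, ∫⁻ y, ‖FIOresc φ qc a ρ₀ ρ₁ χ j k g y t‖ₑ ^ 2 ≤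
        (Set.Icc (1 / 2 : ℝ) 4).indicator (fun _ => ENNReal.ofReal (M₁ ^ 2) *
          (ENNReal.ofReal ((2 * Real.pi * K / lam) ^ 2) * ∫⁻ ξ, ‖fhat g ξ‖ₑ ^ 2)) t := by
      intro t
      by_cases ht : t ∈ Set.Icc (1 / 2 : ℝ) 4
      · rw [Set.indicator_of_mem ht]
        refine le_trans ?_ (mul_le_mul_right (planch3 (H t) (fhat g) K hK0 (hHb t ht) lam hlam0) _)
        rw [← lintegral_const_mul' _ _ ENNReal.ofReal_ne_top]
        refine lintegral_mono fun y => ?_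
        simp only
        rw [hF, enorm_mul, mul_pow, ENNReal.ofReal_pow hM₁.le]
        gcongr
        rw [← ofReal_norm, Complex.norm_real]
        exact ENNReal.ofReal_le_ofReal (bρ₁ _)
      · simp [hF0 _ _ ht]
    have h2 : eLpNorm (fun z : (ℝ × ℝ) × ℝ => FIOresc φ qc a ρ₀ ρ₁ χ j k g z.1 z.2) 2 volume ^ 2 ≤
        (ENNReal.ofReal (M₁ * K * (4 * Real.pi + 8 * R ^ 2 + 1) * (2 : ℝ) ^ (-(j : ℝ))) *
          eLpNorm (fhat g) 2 volume) ^ 2 := by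
      rw [sqF, mul_pow, sqG, Measure.volume_eq_prod, ← lintegral_prod_swap]
      refine (lintegral_prod_le _).trans ?_
      refine (lintegral_mono hfix).trans ?_
      rw [lintegral_indicator measurableSet_Icc, setLIntegral_const, Real.volume_Icc,
        ← mul_assoc, ← ENNReal.ofReal_mul (by positivity), mul_right_comm,
        ← ENNReal.ofReal_mul (by positivity), ← ENNReal.ofReal_pow (by positivity)]
      refine mul_le_mul_left (ENNReal.ofReal_le_ofReal ?_) _
      have e1 : (2 : ℝ) ^ (-(j : ℝ)) = lam⁻¹ := by rw [hlam, Real.rpow_neg (by norm_num)]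
      rw [e1]
      calc M₁ ^ 2 * (2 * Real.pi * K / lam) ^ 2 * (4 - 1 / 2)
          ≤ M₁ ^ 2 * (2 * Real.pi * K / lam) ^ 2 * 4 := by gcongr; norm_num
        _ = (M₁ * K * (4 * Real.pi) * lam⁻¹) ^ 2 := by field_simp; ring
        _ ≤ _ := by
          gcongr
          nlinarith [sq_nonneg R]
    exact (ENNReal.pow_le_pow_left_iff (by norm_num)).1 h2
  · calc _ ≤ ENNReal.ofReal (M₁ * K) * (eLpNorm (fhat g) ⊤ volume *
          volume {ξ : ℝ × ℝ | |ξ.2| ≤ R ∧ |ξ.1 - κ * ξ.2| ≤ 2 * w * R}) := by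
          gcongr
          rw [← setLIntegral_const, eLpNorm_exponent_top]
          exact lintegral_mono_ae (ae_restrict_of_ae (enorm_ae_le_eLpNormEssSup _ _))
      _ ≤ ENNReal.ofReal (M₁ * K) * (eLpNorm (fhat g) ⊤ volume *
          ENNReal.ofReal (8 * R ^ 2 * w)) := by
          gcongr
          exact vol_strip κ w R hw0.le hR.le
      _ = ENNReal.ofReal (M₁ * K * (8 * R ^ 2 * w)) * eLpNorm (fhat g) ⊤ volume := by
          rw [ENNReal.ofReal_mul (p := M₁ * K) (by positivity)]; ring
      _ ≤ _ := by
          gcongr ENNReal.ofReal ?_ * _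
          rw [← mul_assoc]
          gcongr
          linarith
  · rw [eLpNorm_one_eq_lintegral_enorm]
    have h1 : 1 ≤ 4 * Real.pi + 8 * R ^ 2 + 1 := by nlinarith [sq_nonneg R]
    exact mul_le_mul'
      (ENNReal.ofReal_le_ofReal (le_mul_of_one_le_right (by positivity) h1))
      (lintegral_mono' Measure.restrict_le_self le_rfl)
end

section
/- Let M_C be the local circular maximal operator M_C f(y) = sup_{t∈[1,2]} |∫_{S¹} f(y − t x) dσ(x)|, where dσ is the normalized arc-length measure on the unit circle S¹ ⊂ ℝ². If 1 ≤ p, q < ∞ are such that there exists a constant C with ‖M_C f‖_{L^q(ℝ²)} ≤ C ‖f‖_{L^p(ℝ²)} for all f ∈ C₀^∞(ℝ²), then necessarily 1/q ≥ 3/p − 1. -/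
open MeasureTheory Set
open scoped ENNReal Real

/-- The local circular maximal operator
`M_C f (y) = sup_{t ∈ [1,2]} |∫_{S¹} f(y - t x) dσ(x)|`,
where the normalized arc-length measure on `S¹` is realized by the parametrization
`θ ↦ (cos θ, sin θ)`, `θ ∈ [0, 2π]`, with normalizing factor `(2π)⁻¹`. -/
noncomputable def circMax (f : ℝ × ℝ → ℝ) (y : ℝ × ℝ) : ℝ :=
  ⨆ t : Set.Icc (1 : ℝ) 2,
    |(2 * π)⁻¹ * ∫ θ in (0 : ℝ)..(2 * π),
      f (y.1 - t * Real.cos θ, y.2 - t * Real.sin θ)|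


/-- Pointwise lower bound for the maximal function of a function which is `1` on a
`ε × ε²` box. -/
lemma circMax_lower (f : ℝ × ℝ → ℝ) (hc : Continuous f) (h0 : ∀ x, 0 ≤ f x) (h1 : ∀ x, f x ≤ 1)
    (ε : ℝ) (hε : 0 < ε) (hε1 : ε ≤ 1)
    (hf : ∀ a b : ℝ, |a| ≤ ε → |b| ≤ ε ^ 2 → f (a, b) = 1)
    (y : ℝ × ℝ) (hy1 : |y.1| ≤ ε / 2) (hy2 : y.2 ∈ Icc (1 : ℝ) 2) :
    ε / (8 * π) ≤ circMax f y := by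
  have hpi := Real.pi_gt_three
  have hbdd : BddAbove (range fun t : Set.Icc (1 : ℝ) 2 =>
      |(2 * π)⁻¹ * ∫ θ in (0 : ℝ)..(2 * π),
        f (y.1 - t * Real.cos θ, y.2 - t * Real.sin θ)|) := by
    refine ⟨(2 * π)⁻¹ * (1 * |2 * π - 0|), ?_⟩
    rintro _ ⟨t, rfl⟩
    simp only
    rw [abs_mul, abs_of_pos (by positivity : (0 : ℝ) < (2 * π)⁻¹)]
    gcongr
    rw [← Real.norm_eq_abs]
    apply intervalIntegral.norm_integral_le_of_norm_le_const
    intro x _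
    rw [Real.norm_eq_abs, abs_of_nonneg (h0 _)]
    exact h1 _
  refine le_trans ?_ (le_ciSup hbdd ⟨y.2, hy2⟩)
  refine le_trans ?_ (le_abs_self _)
  simp only
  have hcont : Continuous fun θ : ℝ => f (y.1 - y.2 * Real.cos θ, y.2 - y.2 * Real.sin θ) := by
    fun_prop
  have hint : ε / 4 ≤ ∫ θ in (0 : ℝ)..(2 * π),
      f (y.1 - y.2 * Real.cos θ, y.2 - y.2 * Real.sin θ) := by
    have hmono : ∫ θ in (π / 2)..(π / 2 + ε / 4),
        f (y.1 - y.2 * Real.cos θ, y.2 - y.2 * Real.sin θ) ≤ ∫ θ in (0 : ℝ)..(2 * π),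
        f (y.1 - y.2 * Real.cos θ, y.2 - y.2 * Real.sin θ) := by
      apply intervalIntegral.integral_mono_interval (by linarith) (by linarith) (by linarith)
      · exact Filter.Eventually.of_forall fun x => h0 _
      · exact hcont.intervalIntegrable _ _
    have heq : ∫ θ in (π / 2)..(π / 2 + ε / 4),
        f (y.1 - y.2 * Real.cos θ, y.2 - y.2 * Real.sin θ) =
        ∫ θ in (π / 2)..(π / 2 + ε / 4), (1 : ℝ) := by
      apply intervalIntegral.integral_congr
      intro θ hθ
      rw [uIcc_of_le (by linarith)] at hθ
      obtain ⟨hθ1, hθ2⟩ := hθ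
      obtain ⟨s, rfl⟩ : ∃ s, θ = s + π / 2 := ⟨θ - π / 2, by ring⟩
      have hs0 : 0 ≤ s := by linarith
      have hs1 : s ≤ ε / 4 := by linarith
      simp only [Real.cos_add_pi_div_two, Real.sin_add_pi_div_two]
      have hsin0 : 0 ≤ Real.sin s := Real.sin_nonneg_of_nonneg_of_le_pi hs0 (by linarith)
      have hsin1 : Real.sin s ≤ s := Real.sin_le hs0
      have hcos := Real.one_sub_sq_div_two_le_cos (x := s)
      have hcos1 := Real.cos_le_one s
      obtain ⟨hy2a, hy2b⟩ := hy2
      rw [abs_le] at hy1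
      apply hf
      · rw [abs_le]
        constructor <;> nlinarith
      · have hs2 : s ^ 2 ≤ ε ^ 2 / 16 := by nlinarith
        rw [abs_le]
        constructor <;> nlinarith
    rw [heq] at hmono
    simpa using hmono
  calc ε / (8 * π) = (2 * π)⁻¹ * (ε / 4) := by field_simp; norm_num
    _ ≤ _ := by gcongr

lemma box_bound (p q : ℝ) (hp : 1 ≤ p) (hq : 1 ≤ q) (C : ℝ)
    (hC : ∀ f : ℝ × ℝ → ℝ, ContDiff ℝ (⊤ : ℕ∞) f → HasCompactSupport f →
      eLpNorm (circMax f) (ENNReal.ofReal q) volume ≤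
        ENNReal.ofReal C * eLpNorm f (ENNReal.ofReal p) volume)
    (ε : ℝ) (hε : 0 < ε) (hε1 : ε ≤ 1) :
    ε / (8 * π) * ε ^ (1 / q) ≤ max C 0 * (16 * ε ^ 3) ^ (1 / p) := by
  have hpi := Real.pi_pos
  let φ : ContDiffBump (0 : ℝ) := ⟨1, 2, one_pos, one_lt_two⟩
  let f : ℝ × ℝ → ℝ := fun x => φ (x.1 / ε) * φ (x.2 / ε ^ 2)
  have hsm : ContDiff ℝ (⊤ : ℕ∞) f := by
    have h1 : ContDiff ℝ (⊤ : ℕ∞) (φ : ℝ → ℝ) := φ.contDiff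
    exact (h1.comp (contDiff_fst.div_const ε)).mul (h1.comp (contDiff_snd.div_const (ε ^ 2)))
  have hz : ∀ x : ℝ, 2 ≤ |x| → φ x = 0 := fun x hx => φ.zero_of_le_dist (by simpa using hx)
  let B : Set (ℝ × ℝ) := Icc (-(2 * ε)) (2 * ε) ×ˢ Icc (-(2 * ε ^ 2)) (2 * ε ^ 2)
  have hfB : ∀ x, x ∉ B → f x = 0 := by
    intro x hx
    have hx' : ¬ (|x.1| ≤ 2 * ε ∧ |x.2| ≤ 2 * ε ^ 2) := by
      simpa only [B, mem_prod, mem_Icc, ← abs_le] using hx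
    rw [not_and_or, not_le, not_le] at hx'
    rcases hx' with h | h
    · have : φ (x.1 / ε) = 0 := hz _ (by
        rw [abs_div, abs_of_pos hε, le_div_iff₀ hε]; exact h.le)
      simp [f, this]
    · have : φ (x.2 / ε ^ 2) = 0 := hz _ (by
        rw [abs_div, abs_of_pos (by positivity : 0 < ε ^ 2), le_div_iff₀ (by positivity)]
        exact h.le)
      simp [f, this]
  have hcs : HasCompactSupport f :=
    HasCompactSupport.intro (isCompact_Icc.prod isCompact_Icc) hfB
  have hf0 : ∀ x, 0 ≤ f x := fun x => mul_nonneg φ.nonneg φ.nonneg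
  have hf1 : ∀ x, f x ≤ 1 := fun x => mul_le_one₀ φ.le_one φ.nonneg φ.le_one
  have hfone : ∀ a b : ℝ, |a| ≤ ε → |b| ≤ ε ^ 2 → f (a, b) = 1 := by
    intro a b ha hb
    have hone : ∀ x : ℝ, |x| ≤ 1 → φ x = 1 := fun x hx =>
      φ.one_of_mem_closedBall (by simpa [φ] using hx)
    have e1 : φ (a / ε) = 1 := hone _ (by
      rw [abs_div, abs_of_pos hε]; exact (div_le_one hε).2 ha)
    have e2 : φ (b / ε ^ 2) = 1 := hone _ (by
      rw [abs_div, abs_of_pos (by positivity : 0 < ε ^ 2)]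
      exact (div_le_one (by positivity)).2 hb)
    simp [f, e1, e2]
  have hlow := circMax_lower f hsm.continuous hf0 hf1 ε hε hε1 hfone
  have hp0 : ENNReal.ofReal p ≠ 0 := by simp; linarith
  have hq0 : ENNReal.ofReal q ≠ 0 := by simp; linarith
  have hpt : (ENNReal.ofReal p).toReal = p := ENNReal.toReal_ofReal (by linarith)
  have hqt : (ENNReal.ofReal q).toReal = q := ENNReal.toReal_ofReal (by linarith)
  let S : Set (ℝ × ℝ) := Icc (-(ε / 2)) (ε / 2) ×ˢ Icc 1 2
  have hSm : MeasurableSet S := measurableSet_Icc.prod measurableSet_Icc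
  have hBm : MeasurableSet B := measurableSet_Icc.prod measurableSet_Icc
  have hSv : volume S = ENNReal.ofReal ε := by
    simp only [S, Measure.volume_eq_prod, Measure.prod_prod, Real.volume_Icc]
    rw [← ENNReal.ofReal_mul (by linarith)]
    congr 1; ring
  have hBv : volume B = ENNReal.ofReal (16 * ε ^ 3) := by
    simp only [B, Measure.volume_eq_prod, Measure.prod_prod, Real.volume_Icc]
    rw [← ENNReal.ofReal_mul (by linarith)]
    congr 1; ring
  have hL : ENNReal.ofReal (ε / (8 * π) * ε ^ (1 / q)) ≤
      eLpNorm (circMax f) (ENNReal.ofReal q) volume := by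
    have h := eLpNorm_indicator_const (μ := volume) (c := ε / (8 * π)) hSm hq0
      ENNReal.ofReal_ne_top
    rw [hSv, hqt, ENNReal.ofReal_rpow_of_pos hε, Real.enorm_of_nonneg (by positivity),
      ← ENNReal.ofReal_mul (by positivity)] at h
    rw [← h]
    apply eLpNorm_mono
    intro x
    by_cases hx : x ∈ S
    · rw [indicator_of_mem hx]
      have hx2 : |x.1| ≤ ε / 2 := abs_le.2 hx.1
      have := hlow x hx2 hx.2
      rw [Real.norm_of_nonneg (by positivity)]
      exact this.trans (le_abs_self _)
    · rw [indicator_of_notMem hx]; simp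
  have hU : eLpNorm f (ENNReal.ofReal p) volume ≤ ENNReal.ofReal ((16 * ε ^ 3) ^ (1 / p)) := by
    have h := eLpNorm_indicator_const (μ := volume) (c := (1 : ℝ)) hBm hp0
      ENNReal.ofReal_ne_top
    rw [hBv, hpt, ENNReal.ofReal_rpow_of_pos (by positivity), enorm_one, one_mul] at h
    rw [← h]
    apply eLpNorm_mono
    intro x
    by_cases hx : x ∈ B
    · rw [indicator_of_mem hx, Real.norm_of_nonneg (hf0 x)]
      simpa using hf1 x
    · rw [indicator_of_notMem hx, hfB x hx]
  have hfin := hL.trans ((hC f hsm hcs).trans (mul_le_mul_right hU (ENNReal.ofReal C)))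
  have hCm : ENNReal.ofReal C = ENNReal.ofReal (max C 0) := by
    rcases le_total C 0 with h | h
    · simp [h]
    · simp [h]
  rw [hCm, ← ENNReal.ofReal_mul (le_max_right _ _)] at hfin
  exact (ENNReal.ofReal_le_ofReal_iff (by positivity)).1 hfin

/-- **Necessary condition for the circular maximal function.**  If `1 ≤ p, q < ∞` are such
that `‖M_C f‖_{L^q(ℝ²)} ≤ C ‖f‖_{L^p(ℝ²)}` for all `f ∈ C₀^∞(ℝ²)`, then `1/q ≥ 3/p − 1`. -/
theorem circular_maximal_necessary
    (p q : ℝ) (hp : 1 ≤ p) (hq : 1 ≤ q)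
    (hbound : ∃ C : ℝ, ∀ f : ℝ × ℝ → ℝ, ContDiff ℝ (⊤ : ℕ∞) f → HasCompactSupport f →
      eLpNorm (circMax f) (ENNReal.ofReal q) volume ≤
        ENNReal.ofReal C * eLpNorm f (ENNReal.ofReal p) volume) :
    3 / p - 1 ≤ 1 / q := by
  obtain ⟨C, hC⟩ := hbound
  have hpi := Real.pi_pos
  have hmain := box_bound p q hp hq C hC
  by_contra hcon
  push Not at hcon
  set a : ℝ := 3 / p - 1 - 1 / q with ha
  have ha0 : 0 < a := by linarith
  set K : ℝ := 8 * π * (max C 0 * (16 : ℝ) ^ (1 / p)) with hK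
  have hK0 : 0 ≤ K := by positivity
  have hle : ∀ ε : ℝ, 0 < ε → ε ≤ 1 → ε ^ (-a) ≤ K := by
    intro ε hε hε1
    have h := hmain ε hε hε1
    rw [Real.mul_rpow (by norm_num) (by positivity), ← Real.rpow_natCast ε 3,
      ← Real.rpow_mul hε.le] at h
    have e1 : ε ^ (-a) = ε * ε ^ (1 / q) / ε ^ (((3 : ℕ) : ℝ) * (1 / p)) := by
      rw [← Real.rpow_one_add' hε.le (by positivity), ← Real.rpow_sub hε]
      congr 1
      rw [ha]; push_cast; ring
    rw [e1, div_le_iff₀ (by positivity), hK]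
    calc ε * ε ^ (1 / q) = 8 * π * (ε / (8 * π) * ε ^ (1 / q)) := by field_simp
      _ ≤ 8 * π * (max C 0 * (16 ^ (1 / p) * ε ^ (((3 : ℕ) : ℝ) * (1 / p)))) := by gcongr
      _ = _ := by ring
  have h := hle ((K + 1) ^ (-(1 / a))) (by positivity)
    (Real.rpow_le_one_of_one_le_of_nonpos (by linarith) (by
      rw [neg_nonpos]; positivity))
  rw [← Real.rpow_mul (by positivity)] at h
  have e : -(1 / a) * -a = 1 := by field_simp
  rw [e, Real.rpow_one] at h
  linarith
end

section
/- Let 1 < p, q < ∞ satisfy 1/(2p) < 1/q ≤ 1/p and 1/q > 2/p − 1. Let η ∈ C₀^∞(ℝ) be supported in a sufficiently small neighborhood of the origin. Then there exists a constant C = C(p, q, η) such that the maximal operator along the parabola through the origin, M_{P₂} f(y) = sup_{t∈[1,2]} |∫_ℝ f(y₁ − t x, y₂ − t² x²) η(x) dx|, satisfies ‖M_{P₂} f‖_{L^q(ℝ²)} ≤ C ‖f‖_{L^p(ℝ²)} for all f ∈ C₀^∞(ℝ²). -/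
open MeasureTheory Set
open scoped ENNReal

/-- The maximal operator along the parabola `(x, x²)` through the origin, with nonisotropic
dilations `(t, t²)`:
`M_{P₂} f (y) = sup_{t ∈ [1,2]} |∫ f(y₁ - t x, y₂ - t² x²) η(x) dx|`. -/
noncomputable def maxOpParabola (η : ℝ → ℝ) (f : ℝ × ℝ → ℝ) (y : ℝ × ℝ) : ℝ :=
  ⨆ t : Set.Icc (1 : ℝ) 2,
    |∫ x : ℝ, f (y.1 - t * x, y.2 - t ^ 2 * x ^ 2) * η x|

/-- The local averaging operator along the parabola. -/
noncomputable def pT (F : ℝ × ℝ → ℝ≥0∞) (y : ℝ × ℝ) : ℝ≥0∞ :=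
  ∫⁻ u in Icc (-2 : ℝ) 2, F (y.1 - u, y.2 - u ^ 2)

lemma pT_meas {F : ℝ × ℝ → ℝ≥0∞} (hF : Measurable F) : Measurable (pT F) := by
  unfold pT
  apply Measurable.lintegral_prod_right' (f := fun z : (ℝ × ℝ) × ℝ => F (z.1.1 - z.2, z.1.2 - z.2 ^ 2))
  fun_prop

lemma pT_L1 {F : ℝ × ℝ → ℝ≥0∞} (hF : Measurable F) :
    ∫⁻ y, pT F y = 4 * ∫⁻ y, F y := by
  unfold pT
  rw [lintegral_lintegral_swap (by fun_prop)]
  have : ∀ u : ℝ, ∫⁻ y : ℝ × ℝ, F (y.1 - u, y.2 - u ^ 2) = ∫⁻ y, F y := fun u =>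
    lintegral_sub_right_eq_self F (u, u ^ 2)
  simp only [this]
  rw [lintegral_const]
  simp
  rw [mul_comm]
  norm_num

lemma weight_bound (c : ℝ) (hc1 : c < 1) :
    ∃ C : ℝ≥0∞, C ≠ ⊤ ∧ ∀ u ∈ Icc (-2 : ℝ) 2,
      ∫⁻ v in Icc (-2 : ℝ) 2, ENNReal.ofReal |u - v| ^ (-c) ≤ C := by
  refine ⟨∫⁻ w in Icc (-4 : ℝ) 4, ENNReal.ofReal (|w| ^ (-c)), ?_, ?_⟩
  · have h1 : IntervalIntegrable (fun x : ℝ => |x| ^ (-c)) volume 0 4 := by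
      have := intervalIntegral.intervalIntegrable_rpow' (a := 0) (b := 4) (r := -c) (by linarith)
      refine this.congr ?_
      intro x hx
      rw [uIoc_of_le (by norm_num)] at hx
      simp [abs_of_pos hx.1]
    have h2 : IntervalIntegrable (fun x : ℝ => |x| ^ (-c)) volume (-4) 0 := by
      have := ((IntervalIntegrable.iff_comp_neg (by simp)).mp h1).symm
      simpa using this
    have h3 := h2.trans h1
    rw [intervalIntegrable_iff_integrableOn_Icc_of_le (by norm_num)] at h3
    have := h3.2
    rw [hasFiniteIntegral_iff_ofReal] at this
    · exact this.ne
    · filter_upwards with x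
      positivity
  · intro u hu
    have h0 : ∀ᵐ v : ℝ, v ≠ u := by simp [ae_iff]
    calc ∫⁻ v in Icc (-2 : ℝ) 2, ENNReal.ofReal |u - v| ^ (-c)
        = ∫⁻ v in Icc (-2 : ℝ) 2, ENNReal.ofReal (|u - v| ^ (-c)) := by
          refine lintegral_congr_ae (ae_restrict_of_ae ?_)
          filter_upwards [h0] with v hv
          rw [ENNReal.ofReal_rpow_of_pos (abs_pos.2 (sub_ne_zero.2 hv.symm))]
      _ = ∫⁻ v, (Icc (-2 : ℝ) 2).indicator (fun v => ENNReal.ofReal (|u - v| ^ (-c))) v := by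
          rw [lintegral_indicator measurableSet_Icc]
      _ ≤ ∫⁻ v, (Icc (-4 : ℝ) 4).indicator (fun w => ENNReal.ofReal (|w| ^ (-c))) (u - v) := by
          refine lintegral_mono fun v => ?_
          by_cases hv : v ∈ Icc (-2 : ℝ) 2
          · have : u - v ∈ Icc (-4 : ℝ) 4 := by
              constructor <;> linarith [hu.1, hu.2, hv.1, hv.2]
            simp [indicator_of_mem hv, indicator_of_mem this]
          · simp [indicator_of_notMem hv]
      _ = ∫⁻ w, (Icc (-4 : ℝ) 4).indicator (fun w => ENNReal.ofReal (|w| ^ (-c))) w :=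
          lintegral_sub_left_eq_self _ u
      _ = _ := by rw [lintegral_indicator measurableSet_Icc]

lemma cov_bound {H : ℝ × ℝ → ℝ≥0∞} (hH : Measurable H) :
    ∫⁻ u : ℝ, ∫⁻ v : ℝ, H (u - v, u ^ 2 - v ^ 2) * ENNReal.ofReal |u - v| ≤ ∫⁻ z, H z := by
  have e1 : ∀ u : ℝ, ∫⁻ v : ℝ, H (u - v, u ^ 2 - v ^ 2) * ENNReal.ofReal |u - v|
      = ∫⁻ a : ℝ, H (a, 2 * a * u - a ^ 2) * ENNReal.ofReal |a| := by
    intro u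
    rw [← lintegral_sub_left_eq_self (fun a => H (a, 2 * a * u - a ^ 2) * ENNReal.ofReal |a|) u]
    refine lintegral_congr fun v => ?_
    congr 3
    ring
  simp only [e1]
  rw [lintegral_lintegral_swap (by fun_prop)]
  rw [Measure.volume_eq_prod, lintegral_prod _ hH.aemeasurable]
  refine lintegral_mono_ae ?_
  have h0 : ∀ᵐ a : ℝ, a ≠ 0 := by simp [ae_iff]
  filter_upwards [h0] with a ha
  rw [lintegral_mul_const _ (by fun_prop)]
  have h2 : ∫⁻ u : ℝ, H (a, 2 * a * u - a ^ 2)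
      = ENNReal.ofReal |(2 * a)⁻¹| * ∫⁻ b, H (a, b) := by
    have hm := Real.map_volume_mul_left (a := 2 * a) (by positivity)
    rw [← lintegral_sub_right_eq_self (fun b => H (a, b)) (a ^ 2), ← smul_eq_mul (ENNReal.ofReal _),
      ← lintegral_smul_measure, ← hm, lintegral_map (by fun_prop) (by fun_prop)]
  rw [h2, mul_right_comm, ← ENNReal.ofReal_mul (abs_nonneg _), ← abs_mul]
  have : |(2 * a)⁻¹ * a| ≤ 1 := by
    have : (2 * a)⁻¹ * a = 1 / 2 := by field_simp
    rw [this]; norm_num [abs_of_pos]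
  calc _ ≤ 1 * ∫⁻ b, H (a, b) := by
        gcongr
        simpa using ENNReal.ofReal_le_ofReal this
    _ = _ := one_mul _

lemma R_bound (r : ℝ) (hr : 2 < r) :
    ∃ C : ℝ≥0∞, C ≠ ⊤ ∧ ∀ G : ℝ × ℝ → ℝ≥0∞, Measurable G → ∀ z : ℝ × ℝ,
      ∫⁻ u in Icc (-2 : ℝ) 2, pT G (z.1 + u, z.2 + u ^ 2) ^ r ≤ C * ∫⁻ y, G y ^ r := by
  have hr0 : 0 < r := by linarith
  obtain ⟨C, hC, hw⟩ := weight_bound (1 / (r - 1)) (by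
    rw [div_lt_one (by linarith)]; linarith)
  refine ⟨C ^ (r - 1), ENNReal.rpow_ne_top_of_nonneg (by linarith) hC, ?_⟩
  intro G hG z
  set H : ℝ × ℝ → ℝ≥0∞ := fun a => G (z.1 + a.1, z.2 + a.2) ^ r with hHdef
  have hH : Measurable H := by fun_prop
  have key : ∀ u ∈ Icc (-2 : ℝ) 2, pT G (z.1 + u, z.2 + u ^ 2) ^ r ≤
      C ^ (r - 1) * ∫⁻ v, H (u - v, u ^ 2 - v ^ 2) * ENNReal.ofReal |u - v| := by
    intro u hu
    have h0 : ∀ᵐ v : ℝ, v ≠ u := by simp [ae_iff]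
    have h1 : pT G (z.1 + u, z.2 + u ^ 2) ≤
        (∫⁻ v, H (u - v, u ^ 2 - v ^ 2) * ENNReal.ofReal |u - v|) ^ (1 / r) * C ^ (1 - 1 / r) := by
      calc pT G (z.1 + u, z.2 + u ^ 2)
          = ∫⁻ v in Icc (-2 : ℝ) 2, (H (u - v, u ^ 2 - v ^ 2) * ENNReal.ofReal |u - v|) ^ (1 / r) *
              (ENNReal.ofReal |u - v| ^ (-(1 / (r - 1)))) ^ (1 - 1 / r) := by
            unfold pT
            refine lintegral_congr_ae (ae_restrict_of_ae ?_)
            filter_upwards [h0] with v hv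
            have hpos : 0 < |u - v| := abs_pos.2 (sub_ne_zero.2 hv.symm)
            have hne : ENNReal.ofReal |u - v| ≠ 0 := by simpa using sub_ne_zero.2 hv.symm
            rw [ENNReal.mul_rpow_of_nonneg _ _ (by positivity),
              ← ENNReal.rpow_mul (ENNReal.ofReal |u - v|), mul_assoc,
              ← ENNReal.rpow_add _ _ hne ENNReal.ofReal_ne_top]
            have : 1 / r + -(1 / (r - 1)) * (1 - 1 / r) = 0 := by
              have : r - 1 ≠ 0 := by linarith
              field_simp
              ring
            rw [this, ENNReal.rpow_zero, mul_one, hHdef]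
            simp only
            rw [← ENNReal.rpow_mul, mul_one_div_cancel hr0.ne', ENNReal.rpow_one]
            congr 2 <;> ring
        _ ≤ (∫⁻ v in Icc (-2 : ℝ) 2, H (u - v, u ^ 2 - v ^ 2) * ENNReal.ofReal |u - v|) ^ (1 / r) *
              (∫⁻ v in Icc (-2 : ℝ) 2, ENNReal.ofReal |u - v| ^ (-(1 / (r - 1)))) ^ (1 - 1 / r) := by
            apply ENNReal.lintegral_mul_norm_pow_le
            · fun_prop
            · fun_prop
            · positivity
            · rw [sub_nonneg, div_le_one hr0]; linarith
            · ring
        _ ≤ _ := by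
            have : 0 ≤ 1 - 1 / r := by rw [sub_nonneg, div_le_one hr0]; linarith
            gcongr
            · exact Measure.restrict_le_self
            · exact hw u hu
    calc _ ≤ ((∫⁻ v, H (u - v, u ^ 2 - v ^ 2) * ENNReal.ofReal |u - v|) ^ (1 / r)
            * C ^ (1 - 1 / r)) ^ r := by gcongr
      _ = _ := by
        rw [ENNReal.mul_rpow_of_nonneg _ _ hr0.le, ← ENNReal.rpow_mul, ← ENNReal.rpow_mul,
          one_div_mul_cancel hr0.ne', ENNReal.rpow_one, mul_comm]
        congr 2
        field_simp
  calc _ ≤ ∫⁻ u in Icc (-2 : ℝ) 2, C ^ (r - 1) *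
        ∫⁻ v, H (u - v, u ^ 2 - v ^ 2) * ENNReal.ofReal |u - v| :=
        setLIntegral_mono' measurableSet_Icc key
    _ ≤ ∫⁻ u : ℝ, C ^ (r - 1) *
        ∫⁻ v, H (u - v, u ^ 2 - v ^ 2) * ENNReal.ofReal |u - v| := setLIntegral_le_lintegral _ _
    _ = C ^ (r - 1) * ∫⁻ u : ℝ, ∫⁻ v, H (u - v, u ^ 2 - v ^ 2) * ENNReal.ofReal |u - v| := by
        rw [lintegral_const_mul']
        exact ENNReal.rpow_ne_top_of_nonneg (by linarith) hC
    _ ≤ C ^ (r - 1) * ∫⁻ y, H y := by gcongr; exact cov_bound hH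
    _ = _ := by
        congr 1
        exact lintegral_add_left_eq_self (fun y => G y ^ r) z

lemma tri_bound (r : ℝ) (hr : 2 < r) :
    ∃ C : ℝ≥0∞, C ≠ ⊤ ∧ ∀ h G : ℝ × ℝ → ℝ≥0∞, Measurable h → Measurable G →
      ∫⁻ y, pT h y * pT G y ^ (2 : ℝ) ≤ C * ((∫⁻ y, h y) * (∫⁻ y, G y ^ r) ^ (2 / r)) := by
  have hr0 : 0 < r := by linarith
  have hr2 : 0 ≤ 1 - 2 / r := by rw [sub_nonneg, div_le_one hr0]; linarith
  obtain ⟨C, hC, hR⟩ := R_bound r hr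
  refine ⟨C ^ (2 / r) * 4 ^ (1 - 2 / r), ?_, ?_⟩
  · exact ENNReal.mul_ne_top (ENNReal.rpow_ne_top_of_nonneg (by positivity) hC)
      (ENNReal.rpow_ne_top_of_nonneg hr2 (by norm_num))
  intro h G hh hG
  have hTG := pT_meas hG
  have h1 : ∀ z : ℝ × ℝ, ∫⁻ u in Icc (-2 : ℝ) 2, pT G (z.1 + u, z.2 + u ^ 2) ^ (2 : ℝ) ≤
      C ^ (2 / r) * 4 ^ (1 - 2 / r) * (∫⁻ y, G y ^ r) ^ (2 / r) := by
    intro z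
    calc _ = ∫⁻ u in Icc (-2 : ℝ) 2, (pT G (z.1 + u, z.2 + u ^ 2) ^ r) ^ (2 / r) *
          (1 : ℝ≥0∞) ^ (1 - 2 / r) := by
          refine lintegral_congr fun u => ?_
          rw [← ENNReal.rpow_mul, mul_div_cancel₀ _ hr0.ne', ENNReal.one_rpow, mul_one]
      _ ≤ (∫⁻ u in Icc (-2 : ℝ) 2, pT G (z.1 + u, z.2 + u ^ 2) ^ r) ^ (2 / r) *
          (∫⁻ u in Icc (-2 : ℝ) 2, (1 : ℝ≥0∞)) ^ (1 - 2 / r) := by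
          apply ENNReal.lintegral_mul_norm_pow_le
          · fun_prop
          · fun_prop
          · positivity
          · exact hr2
          · ring
      _ ≤ (C * ∫⁻ y, G y ^ r) ^ (2 / r) * 4 ^ (1 - 2 / r) := by
          gcongr
          · exact hR G hG z
          · simp; norm_num
      _ = _ := by
          rw [ENNReal.mul_rpow_of_nonneg _ _ (by positivity)]
          ring
  calc ∫⁻ y, pT h y * pT G y ^ (2 : ℝ)
      = ∫⁻ y : ℝ × ℝ, ∫⁻ u in Icc (-2 : ℝ) 2, h (y.1 - u, y.2 - u ^ 2) * pT G y ^ (2 : ℝ) := by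
        refine lintegral_congr fun y => ?_
        rw [lintegral_mul_const _ (by fun_prop)]
        rfl
    _ = ∫⁻ u in Icc (-2 : ℝ) 2, ∫⁻ y : ℝ × ℝ, h (y.1 - u, y.2 - u ^ 2) * pT G y ^ (2 : ℝ) :=
        lintegral_lintegral_swap (by fun_prop)
    _ = ∫⁻ u in Icc (-2 : ℝ) 2, ∫⁻ z : ℝ × ℝ, h z * pT G (z.1 + u, z.2 + u ^ 2) ^ (2 : ℝ) := by
        refine lintegral_congr fun u => ?_
        rw [← lintegral_add_right_eq_self _ ((u, u ^ 2) : ℝ × ℝ)]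
        refine lintegral_congr fun z => ?_
        simp [Prod.add_def]
    _ = ∫⁻ z : ℝ × ℝ, ∫⁻ u in Icc (-2 : ℝ) 2, h z * pT G (z.1 + u, z.2 + u ^ 2) ^ (2 : ℝ) :=
        lintegral_lintegral_swap (by fun_prop)
    _ = ∫⁻ z : ℝ × ℝ, h z * ∫⁻ u in Icc (-2 : ℝ) 2, pT G (z.1 + u, z.2 + u ^ 2) ^ (2 : ℝ) := by
        refine lintegral_congr fun z => ?_
        rw [lintegral_const_mul _ (by fun_prop)]
    _ ≤ ∫⁻ z : ℝ × ℝ, h z * (C ^ (2 / r) * 4 ^ (1 - 2 / r) * (∫⁻ y, G y ^ r) ^ (2 / r)) := by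
        gcongr with z
        exact h1 z
    _ = _ := by
        rw [lintegral_mul_const _ hh]
        ring

lemma pT_interp (p q r : ℝ) (hp : 0 < p) (hq : 0 < q) (hr : 2 < r)
    (hd : 1 / q ≤ 1 / p) (h1 : r * (1 / p - 1 / q) ≤ 2 / q)
    (h2 : r * (1 / p - 1 / q) ≤ 1 - 1 / q) :
    ∃ C : ℝ≥0∞, C ≠ ⊤ ∧ ∀ F : ℝ × ℝ → ℝ≥0∞, Measurable F →
      ∫⁻ y, pT F y ^ q ≤ C * (∫⁻ y, F y ^ p) ^ (q / p) := by
  have hr0 : 0 < r := by linarith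
  obtain ⟨C, hC, htri⟩ := tri_bound r hr
  set b := r * (1 / p - 1 / q) with hb
  have hb0 : 0 ≤ b := mul_nonneg hr0.le (by linarith)
  set m := b * q / 2 with hm
  have hm0 : 0 ≤ m := by positivity
  have hm1 : m ≤ 1 := by
    rw [le_div_iff₀ hq] at h1
    linarith
  have h1q : 0 < 1 / q := by positivity
  set K : ℝ≥0∞ := (4 ^ (1 - 1 / q - b)) ^ q with hK
  have hKt : K ≠ ⊤ := ENNReal.rpow_ne_top_of_nonneg hq.le
    (ENNReal.rpow_ne_top_of_nonneg (by linarith) (by norm_num))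
  refine ⟨K * (4 ^ (1 - m) * C ^ m), ?_, ?_⟩
  · exact ENNReal.mul_ne_top hKt (ENNReal.mul_ne_top
      (ENNReal.rpow_ne_top_of_nonneg (by linarith) (by norm_num))
      (ENNReal.rpow_ne_top_of_nonneg hm0 hC))
  intro F hF
  set h : ℝ × ℝ → ℝ≥0∞ := fun y => F y ^ p with hh
  set G : ℝ × ℝ → ℝ≥0∞ := fun y => F y ^ (p / r) with hG
  have hhm : Measurable h := by fun_prop
  have hGm : Measurable G := by fun_prop
  have hTh := pT_meas hhm
  have hTG := pT_meas hGm
  have hexp : p * (1 / q) + p / r * b = 1 := by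
    rw [hb]; field_simp; ring
  have step1 : ∀ y, pT F y ≤ 4 ^ (1 - 1 / q - b) * (pT h y ^ (1 / q) * pT G y ^ b) := by
    intro y
    have := ENNReal.lintegral_mul_prod_norm_pow_le (μ := volume.restrict (Icc (-2 : ℝ) 2))
      (Finset.univ : Finset (Fin 2)) (g := fun _ => 1)
      (f := ![fun u => h (y.1 - u, y.2 - u ^ 2), fun u => G (y.1 - u, y.2 - u ^ 2)])
      (by fun_prop) (by
        intro i _
        fin_cases i
        · simp; fun_prop
        · simp; fun_prop) (1 - 1 / q - b) (p := ![1 / q, b])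
      (by simp) (by linarith) (by
        intro i _
        fin_cases i
        · simpa using hq.le
        · simpa using hb0)
    simp only [Fin.prod_univ_two, Matrix.cons_val_zero, Matrix.cons_val_one,
      ENNReal.one_rpow, one_mul] at this
    refine le_trans (le_of_eq ?_) (this.trans (le_of_eq ?_))
    · unfold pT
      refine lintegral_congr fun u => ?_
      simp only [hh, hG]
      rw [← ENNReal.rpow_mul, ← ENNReal.rpow_mul,
        ← ENNReal.rpow_add_of_nonneg _ _ (by positivity) (by positivity), hexp, ENNReal.rpow_one]
    · congr 2
      simp; norm_num
  have step2 : ∀ y, pT F y ^ q ≤ K * (pT h y ^ (1 - m) * (pT h y * pT G y ^ (2 : ℝ)) ^ m) := by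
    intro y
    calc _ ≤ (4 ^ (1 - 1 / q - b) * (pT h y ^ (1 / q) * pT G y ^ b)) ^ q := by
          gcongr; exact step1 y
      _ = _ := by
        rw [ENNReal.mul_rpow_of_nonneg _ _ hq.le, ENNReal.mul_rpow_of_nonneg _ _ hq.le,
          ENNReal.mul_rpow_of_nonneg _ _ hm0, ← mul_assoc (pT h y ^ (1 - m)),
          ← ENNReal.rpow_add_of_nonneg _ _ (by linarith) hm0, ← ENNReal.rpow_mul (pT h y),
          ← ENNReal.rpow_mul (pT G y), ← ENNReal.rpow_mul (pT G y)]
        congr 3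
        · field_simp; ring
        · rw [hm]; ring
  have e1 : ∫⁻ y, G y ^ r = ∫⁻ y, h y := by
    refine lintegral_congr fun y => ?_
    simp only [hh, hG]
    rw [← ENNReal.rpow_mul, div_mul_cancel₀ _ hr0.ne']
  have t := htri h G hhm hGm
  rw [e1] at t
  calc ∫⁻ y, pT F y ^ q
      ≤ ∫⁻ y, K * (pT h y ^ (1 - m) * (pT h y * pT G y ^ (2 : ℝ)) ^ m) := lintegral_mono step2
    _ = K * ∫⁻ y, (pT h y ^ (1 - m) * (pT h y * pT G y ^ (2 : ℝ)) ^ m) :=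
        lintegral_const_mul' _ _ hKt
    _ ≤ K * ((∫⁻ y, pT h y) ^ (1 - m) * (∫⁻ y, pT h y * pT G y ^ (2 : ℝ)) ^ m) := by
        gcongr
        apply ENNReal.lintegral_mul_norm_pow_le
        · fun_prop
        · fun_prop
        · linarith
        · exact hm0
        · ring
    _ ≤ K * ((4 * ∫⁻ y, h y) ^ (1 - m) *
          (C * ((∫⁻ y, h y) * (∫⁻ y, h y) ^ (2 / r))) ^ m) := by
        rw [pT_L1 hhm]
        gcongr
    _ = _ := by
        set N := ∫⁻ y, h y
        have hm1' : 0 ≤ 1 - m := by linarith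
        rw [ENNReal.mul_rpow_of_nonneg _ _ hm1', ENNReal.mul_rpow_of_nonneg _ _ hm0,
          ENNReal.mul_rpow_of_nonneg _ _ hm0, ← ENNReal.rpow_mul]
        have : N ^ (q / p) = N ^ (1 - m) * (N ^ m * N ^ (2 / r * m)) := by
          rw [← ENNReal.rpow_add_of_nonneg _ _ hm0 (by positivity),
            ← ENNReal.rpow_add_of_nonneg _ _ hm1' (by positivity)]
          congr 1
          rw [hm, hb]; field_simp; ring
        rw [this]
        ring

lemma max_le_pT (η : ℝ → ℝ) (B : ℝ) (hB : ∀ x, |η x| ≤ B)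
    (hs : tsupport η ⊆ Icc (-1) 1) (f : ℝ × ℝ → ℝ) (hf : Continuous f) (y : ℝ × ℝ) :
    ‖maxOpParabola η f y‖ₑ ≤ ENNReal.ofReal B * pT (fun z => ‖f z‖ₑ) y := by
  have hone : ∀ t : Icc (1 : ℝ) 2,
      ENNReal.ofReal |∫ x : ℝ, f (y.1 - t * x, y.2 - (t : ℝ) ^ 2 * x ^ 2) * η x| ≤
      ENNReal.ofReal B * pT (fun z => ‖f z‖ₑ) y := by
    rintro ⟨t, ht1, ht2⟩
    simp only
    set g : ℝ → ℝ≥0∞ := (Icc (-2 : ℝ) 2).indicator (fun u => ‖f (y.1 - u, y.2 - u ^ 2)‖ₑ) with hg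
    have hgm : Measurable g := by
      apply Measurable.indicator _ measurableSet_Icc
      exact (hf.comp (by fun_prop : Continuous fun u : ℝ => (y.1 - u, y.2 - u ^ 2))).enorm.measurable
    rw [← Real.enorm_eq_ofReal_abs]
    calc _ ≤ ∫⁻ x, ‖f (y.1 - t * x, y.2 - t ^ 2 * x ^ 2) * η x‖ₑ :=
          enorm_integral_le_lintegral_enorm _
      _ ≤ ∫⁻ x, ENNReal.ofReal B * g (t * x) := by
          refine lintegral_mono fun x => ?_
          simp only
          by_cases hx : x ∈ Icc (-1 : ℝ) 1
          · have : t * x ∈ Icc (-2 : ℝ) 2 := by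
              constructor <;> nlinarith [hx.1, hx.2]
            rw [hg, indicator_of_mem this, enorm_mul, mul_comm, mul_pow]
            gcongr
            rw [Real.enorm_eq_ofReal_abs]
            exact ENNReal.ofReal_le_ofReal (hB x)
          · have : η x = 0 := image_eq_zero_of_notMem_tsupport fun h => hx (hs h)
            simp [this]
      _ = ENNReal.ofReal B * ∫⁻ x, g (t * x) := by
          rw [lintegral_const_mul' _ _ ENNReal.ofReal_ne_top]
      _ ≤ ENNReal.ofReal B * ∫⁻ u, g u := by
          refine mul_le_mul_right ?_ _
          have ht0 : t ≠ 0 := by linarith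
          rw [← lintegral_map (f := g) (g := fun x => t * x) hgm (by fun_prop),
            Real.map_volume_mul_left ht0, lintegral_smul_measure, smul_eq_mul]
          calc _ ≤ 1 * ∫⁻ u, g u := by
                gcongr
                have : |t⁻¹| ≤ 1 := by
                  rw [abs_of_pos (by positivity)]
                  exact inv_le_one_of_one_le₀ ht1
                simpa using ENNReal.ofReal_le_ofReal this
            _ = _ := one_mul _
      _ = _ := by
          rw [hg, lintegral_indicator measurableSet_Icc]
          rfl
  by_cases htop : ENNReal.ofReal B * pT (fun z => ‖f z‖ₑ) y = ⊤
  · rw [htop]; exact le_top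
  have hnn : 0 ≤ maxOpParabola η f y := Real.iSup_nonneg fun t => abs_nonneg _
  rw [Real.enorm_eq_ofReal hnn, ENNReal.ofReal_le_iff_le_toReal htop]
  refine Real.iSup_le (fun t => ?_) ENNReal.toReal_nonneg
  rw [← ENNReal.ofReal_le_iff_le_toReal htop]
  exact hone t

lemma exists_r (d m : ℝ) (hd : 0 ≤ d) (h : 2 * d < m) : ∃ r : ℝ, 2 < r ∧ r * d ≤ m := by
  rcases hd.eq_or_lt with rfl | hd
  · exact ⟨3, by norm_num, by linarith⟩
  · exact ⟨m / d, by rwa [lt_div_iff₀ hd], by rw [div_mul_cancel₀ _ hd.ne']⟩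

/-- **`L^p → L^q` bounds for the parabola through the origin.**  Let `1 < p, q < ∞` satisfy
`1/(2p) < 1/q ≤ 1/p` and `1/q > 2/p − 1`.  Then for every smooth cutoff `η` supported in a
sufficiently small neighborhood of the origin there is a constant `C = C(p,q,η)` with
`‖M_{P₂} f‖_{L^q(ℝ²)} ≤ C ‖f‖_{L^p(ℝ²)}` for all `f ∈ C₀^∞(ℝ²)`. -/
theorem parabola_maximal_Lp_Lq
    (p q : ℝ) (hp : 1 < p) (hq : 1 < q)
    (hpq₁ : 1 / (2 * p) < 1 / q) (hpq₂ : 1 / q ≤ 1 / p) (hpq₃ : 2 / p - 1 < 1 / q) :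
    ∃ ε₀ > 0, ∀ η : ℝ → ℝ, ContDiff ℝ (⊤ : ℕ∞) η → HasCompactSupport η →
      tsupport η ⊆ Set.Icc (-ε₀) ε₀ →
      ∃ C > 0, ∀ f : ℝ × ℝ → ℝ, ContDiff ℝ (⊤ : ℕ∞) f → HasCompactSupport f →
        eLpNorm (maxOpParabola η f) (ENNReal.ofReal q) volume ≤
          ENNReal.ofReal C * eLpNorm f (ENNReal.ofReal p) volume := by
  have hp0 : 0 < p := by linarith
  have hq0 : 0 < q := by linarith
  obtain ⟨r, hr2, hr⟩ := exists_r (1 / p - 1 / q) (min (2 / q) (1 - 1 / q)) (by linarith) (by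
    have e1 : 1 / (2 * p) = (1 / p) / 2 := by field_simp
    have e2 : 2 / p = 2 * (1 / p) := by ring
    have e3 : 2 / q = 2 * (1 / q) := by ring
    rw [e1] at hpq₁
    rw [e2] at hpq₃
    rw [e3]
    apply lt_min <;> linarith)
  obtain ⟨C, hC, hmain⟩ := pT_interp p q r hp0 hq0 hr2 hpq₂ (hr.trans (min_le_left _ _))
    (hr.trans (min_le_right _ _))
  refine ⟨1, one_pos, fun η hη hηc hηs => ?_⟩
  obtain ⟨B, hB⟩ := hηc.exists_bound_of_continuous hη.continuous
  have hB' : ∀ x, |η x| ≤ B := hB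
  set D : ℝ≥0∞ := ENNReal.ofReal B * C ^ (1 / q) with hD
  have hDt : D ≠ ⊤ := ENNReal.mul_ne_top ENNReal.ofReal_ne_top
    (ENNReal.rpow_ne_top_of_nonneg (by positivity) hC)
  refine ⟨D.toReal + 1, by positivity, fun f hf _ => ?_⟩
  have hfc : Continuous f := hf.continuous
  have hq1 : ENNReal.ofReal q ≠ 0 := by simpa using hq0
  have hp1 : ENNReal.ofReal p ≠ 0 := by simpa using hp0
  rw [eLpNorm_eq_lintegral_rpow_enorm_toReal hq1 ENNReal.ofReal_ne_top,
    eLpNorm_eq_lintegral_rpow_enorm_toReal hp1 ENNReal.ofReal_ne_top,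
    ENNReal.toReal_ofReal hq0.le, ENNReal.toReal_ofReal hp0.le]
  have hDle : D ≤ ENNReal.ofReal (D.toReal + 1) := by
    rw [ENNReal.le_ofReal_iff_toReal_le hDt (by positivity)]
    linarith
  calc (∫⁻ y, ‖maxOpParabola η f y‖ₑ ^ q) ^ (1 / q)
      ≤ (∫⁻ y, ENNReal.ofReal B ^ q * pT (fun z => ‖f z‖ₑ) y ^ q) ^ (1 / q) := by
        gcongr with y
        rw [← ENNReal.mul_rpow_of_nonneg _ _ hq0.le]
        gcongr
        exact max_le_pT η B hB' hηs f hfc y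
    _ = (ENNReal.ofReal B ^ q * ∫⁻ y, pT (fun z => ‖f z‖ₑ) y ^ q) ^ (1 / q) := by
        rw [lintegral_const_mul' _ _ (ENNReal.rpow_ne_top_of_nonneg hq0.le ENNReal.ofReal_ne_top)]
    _ ≤ (ENNReal.ofReal B ^ q * (C * (∫⁻ y, ‖f y‖ₑ ^ p) ^ (q / p))) ^ (1 / q) := by
        gcongr
        exact hmain _ (by fun_prop)
    _ = D * (∫⁻ y, ‖f y‖ₑ ^ p) ^ (1 / p) := by
        have : 0 ≤ 1 / q := by positivity
        rw [ENNReal.mul_rpow_of_nonneg _ _ this, ENNReal.mul_rpow_of_nonneg _ _ this,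
          ← ENNReal.rpow_mul, ← ENNReal.rpow_mul, mul_one_div_cancel hq0.ne', ENNReal.rpow_one,
          hD, mul_assoc]
        congr 3
        field_simp
    _ ≤ _ := by gcongr
end
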